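/- arXiv:1908.06483 — 2 statements merged into one kernel-verified Lean document; each statement's English description precedes it below -/
import Mathlib

section
/- For every a ≥ 1, the first Dirichlet biharmonic eigenvalue satisfies the lower bound λ₁(a) ≥ L(a), where L(a) = ρ(π²a⁴)·a⁻⁴ + ρ(π²a⁻⁴)·a⁴ − 2π⁴. -/
/-!
Integrating by parts twice, `∫ (Δu)² = ∫ uₓₓ² + 2 ∫ uₓᵧ² + ∫ uᵧᵧ²`. On the rectangle
`(0, A) × (0, B)` the commuting operators `-∂ₓ² - (π/A)²` and `-∂ᵧ² - (π/B)²` are nonnegative, and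
so is their product; this bounds `∫ uₓᵧ²` from below by
`(π/B)² ∫ uₓ² + (π/A)² ∫ uᵧ² - (π/A)² (π/B)² ∫ u²`. What is left splits into a functional of the
horizontal slices of `u` and one of the vertical slices, and each slice is estimated by the
variational definition of `ρ`, rescaled to the length of the slice.

The nonnegativity is a ground state transformation: `c(x) = k cot (k x)` solves `c' + c² = -k²`,
and therefore `∫ (w' - c w)² = ∫ w'² - k² ∫ w²` for every test function `w`. As `c` depends on one
variable only, `∂ - c` commutes with the derivative in the other variable, which gives the
statement for the product.
-/

open MeasureTheory Real Filter

noncomputable section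

/-- Directional (partial) derivative of `u : ℝ × ℝ → ℝ` in direction `v`. -/
def pd (v : ℝ × ℝ) (u : ℝ × ℝ → ℝ) : ℝ × ℝ → ℝ := fun p => fderiv ℝ u p v

/-- Second partial derivative `∂²u/∂x²`. -/
def uxx (u : ℝ × ℝ → ℝ) : ℝ × ℝ → ℝ := pd (1, 0) (pd (1, 0) u)

/-- Second partial derivative `∂²u/∂y²`. -/
def uyy (u : ℝ × ℝ → ℝ) : ℝ × ℝ → ℝ := pd (0, 1) (pd (0, 1) u)

/-- Mixed second partial derivative `∂²u/∂x∂y`. -/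
def uxy (u : ℝ × ℝ → ℝ) : ℝ × ℝ → ℝ := pd (0, 1) (pd (1, 0) u)

/-- The Laplacian `Δu = u_xx + u_yy`. -/
def lap (u : ℝ × ℝ → ℝ) : ℝ × ℝ → ℝ := fun p => uxx u p + uyy u p

/-- The open rectangle `R_a = (0,a) × (0,1/a)` of unit area. -/
def Rect (a : ℝ) : Set (ℝ × ℝ) := Set.Ioo 0 a ×ˢ Set.Ioo 0 (1 / a)

/-- Admissible test functions: smooth, compactly supported inside `Ω`. -/
def Adm (Ω : Set (ℝ × ℝ)) (u : ℝ × ℝ → ℝ) : Prop :=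
  ContDiff ℝ (⊤ : ℕ∞) u ∧ HasCompactSupport u ∧ tsupport u ⊆ Ω

/-- First Dirichlet eigenvalue of the biharmonic operator on `R_a`,
characterized variationally as the infimum of the Rayleigh quotient. -/
def lam1 (a : ℝ) : ℝ :=
  sInf { μ | ∃ u : ℝ × ℝ → ℝ, Adm (Rect a) u ∧ u ≠ 0 ∧
    μ = (∫ p, (lap u p) ^ 2) / (∫ p, (u p) ^ 2) }

/-- Admissible one-dimensional test functions: smooth, compactly supported in `(0,1)`. -/
def Adm1 (v : ℝ → ℝ) : Prop :=
  ContDiff ℝ (⊤ : ℕ∞) v ∧ HasCompactSupport v ∧ tsupport v ⊆ Set.Ioo 0 1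

/-- `ρ(α)`: first eigenvalue of `y'''' - 2αy'' = λy` on `(0,1)` with clamped
boundary conditions, characterized variationally. -/
def rho (α : ℝ) : ℝ :=
  sInf { r | ∃ v : ℝ → ℝ, Adm1 v ∧ (∫ x in (0:ℝ)..1, (v x) ^ 2) = 1 ∧
    r = (∫ x in (0:ℝ)..1, (deriv (deriv v) x) ^ 2) +
        2 * α * (∫ x in (0:ℝ)..1, (deriv v x) ^ 2) }

open scoped ContDiff

section DirectionalDerivative

variable {E : Type*} [NormedAddCommGroup E] [NormedSpace ℝ E] {f g : E → ℝ} {x : E}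

/-- The derivative of `f` in the direction `v`: the analogue of `pd` on an arbitrary normed space,
to which it is definitionally equal on `ℝ × ℝ`. -/
def dirDeriv (v : E) (f : E → ℝ) : E → ℝ := fun x => fderiv ℝ f x v

lemma dirDeriv_mul (v : E) (hf : DifferentiableAt ℝ f x) (hg : DifferentiableAt ℝ g x) :
    dirDeriv v (fun y => f y * g y) x = f x * dirDeriv v g x + dirDeriv v f x * g x := by
  simp [dirDeriv, fderiv_fun_mul hf hg, mul_comm]

lemma dirDeriv_sub (v : E) (hf : DifferentiableAt ℝ f x) (hg : DifferentiableAt ℝ g x) :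
    dirDeriv v (fun y => f y - g y) x = dirDeriv v f x - dirDeriv v g x := by
  simp [dirDeriv, fderiv_fun_sub hf hg]

lemma dirDeriv_comp_continuousLinearMap {h : ℝ → ℝ} {ℓ : E →L[ℝ] ℝ} (v : E)
    (hh : DifferentiableAt ℝ h (ℓ x)) : dirDeriv v (h ∘ ℓ) x = ℓ v * deriv h (ℓ x) := by
  simp [dirDeriv, fderiv_comp x hh ℓ.differentiableAt]

lemma dirDeriv_comp_continuousLinearEquiv {F : Type*} [NormedAddCommGroup F] [NormedSpace ℝ F]
    (e : F ≃L[ℝ] E) (v : F) (f : E → ℝ) : dirDeriv v (f ∘ e) = dirDeriv (e v) f ∘ e := by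
  ext y
  simp [dirDeriv, e.comp_right_fderiv]

lemma dirDeriv_dirDeriv_eq_fderiv_fderiv (hf : ContDiff ℝ 2 f) (v w : E) (x : E) :
    dirDeriv v (dirDeriv w f) x = fderiv ℝ (fderiv ℝ f) x v w := by
  have hdf : DifferentiableAt ℝ (fderiv ℝ f) x :=
    (hf.fderiv_right (m := 1) (by norm_num)).differentiable (by simp) x
  change fderiv ℝ (fun y => fderiv ℝ f y w) x v = _
  simp [fderiv_clm_apply hdf (differentiableAt_const w)]

lemma dirDeriv_comm (hf : ContDiff ℝ 2 f) (v w : E) :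
    dirDeriv v (dirDeriv w f) = dirDeriv w (dirDeriv v f) := by
  ext x
  rw [dirDeriv_dirDeriv_eq_fderiv_fderiv hf, dirDeriv_dirDeriv_eq_fderiv_fderiv hf]
  exact hf.contDiffAt.isSymmSndFDerivAt (by simp) v w

lemma dirDeriv_one_eq_deriv (f : ℝ → ℝ) : dirDeriv 1 f = deriv f := by
  ext x
  simp [dirDeriv]

end DirectionalDerivative

/-- Smooth functions compactly supported in `Ω`, on an arbitrary normed space. Both `Adm Ω` (on
`ℝ × ℝ`) and `Adm1` (with `Ω = (0, 1)`) unfold to this predicate. -/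
def IsTestFunction {E : Type*} [NormedAddCommGroup E] [NormedSpace ℝ E]
    (Ω : Set E) (f : E → ℝ) : Prop :=
  ContDiff ℝ ∞ f ∧ HasCompactSupport f ∧ tsupport f ⊆ Ω

namespace IsTestFunction

section Basic

variable {E : Type*} [NormedAddCommGroup E] [NormedSpace ℝ E] {Ω : Set E} {f g c : E → ℝ}

lemma contDiff (hf : IsTestFunction Ω f) : ContDiff ℝ ∞ f := hf.1

lemma hasCompactSupport (hf : IsTestFunction Ω f) : HasCompactSupport f := hf.2.1

lemma tsupport_subset (hf : IsTestFunction Ω f) : tsupport f ⊆ Ω := hf.2.2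

lemma continuous (hf : IsTestFunction Ω f) : Continuous f := hf.contDiff.continuous

lemma contDiff_two (hf : IsTestFunction Ω f) : ContDiff ℝ 2 f :=
  hf.contDiff.of_le (WithTop.coe_le_coe.2 (le_top : (2 : ℕ∞) ≤ ⊤))

lemma differentiable (hf : IsTestFunction Ω f) : Differentiable ℝ f :=
  hf.contDiff.differentiable (by simp)

lemma eq_zero_of_notMem (hf : IsTestFunction Ω f) {x : E} (hx : x ∉ Ω) : f x = 0 :=
  image_eq_zero_of_notMem_tsupport fun h => hx (hf.tsupport_subset h)

protected lemma dirDeriv (hf : IsTestFunction Ω f) (v : E) : IsTestFunction Ω (dirDeriv v f) :=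
  ⟨(hf.contDiff.fderiv_right (m := ∞) (by simp)).clm_apply contDiff_const,
    hf.hasCompactSupport.fderiv_apply ℝ v,
    (tsupport_fderiv_apply_subset ℝ v).trans hf.tsupport_subset⟩

lemma contDiffOn_mul (hf : IsTestFunction Ω f) (hΩ : IsOpen Ω) (hc : ContDiffOn ℝ ∞ c Ω) :
    IsTestFunction Ω (fun x => c x * f x) := by
  refine ⟨contDiff_iff_contDiffAt.2 fun x => ?_, hf.hasCompactSupport.mul_left,
    (tsupport_mul_subset_right (f := c)).trans hf.tsupport_subset⟩
  by_cases hx : x ∈ tsupport f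
  · exact (hc.contDiffAt (hΩ.mem_nhds (hf.tsupport_subset hx))).mul hf.contDiff.contDiffAt
  · refine (contDiffAt_const (c := (0 : ℝ))).congr_of_eventuallyEq ?_
    filter_upwards [notMem_tsupport_iff_eventuallyEq.1 hx] with y hy
    simp [hy]

protected lemma mul (hf : IsTestFunction Ω f) (hg : IsTestFunction Ω g) :
    IsTestFunction Ω (fun x => f x * g x) :=
  ⟨hf.contDiff.mul hg.contDiff, hg.hasCompactSupport.mul_left,
    (tsupport_mul_subset_right (f := f)).trans hg.tsupport_subset⟩

protected lemma const_mul (hf : IsTestFunction Ω f) (r : ℝ) :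
    IsTestFunction Ω (fun x => r * f x) :=
  ⟨contDiff_const.mul hf.contDiff, hf.hasCompactSupport.mul_left,
    (tsupport_mul_subset_right (f := fun _ => r)).trans hf.tsupport_subset⟩

protected lemma sub (hf : IsTestFunction Ω f) (hg : IsTestFunction Ω g) :
    IsTestFunction Ω (fun x => f x - g x) :=
  ⟨hf.contDiff.sub hg.contDiff, hf.hasCompactSupport.sub hg.hasCompactSupport,
    (tsupport_sub f g).trans (Set.union_subset hf.tsupport_subset hg.tsupport_subset)⟩

protected lemma sq (hf : IsTestFunction Ω f) : IsTestFunction Ω (fun x => f x ^ 2) := by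
  simpa only [pow_two] using hf.mul hf

lemma comp_continuousLinearEquiv {F : Type*} [NormedAddCommGroup F] [NormedSpace ℝ F]
    (hf : IsTestFunction Ω f) (e : F ≃L[ℝ] E) : IsTestFunction (e ⁻¹' Ω) (f ∘ e) := by
  refine ⟨hf.contDiff.comp e.contDiff, hf.hasCompactSupport.comp_homeomorph e.toHomeomorph, ?_⟩
  exact (tsupport_comp_subset_preimage f e.continuous).trans
    (Set.preimage_mono hf.tsupport_subset)

variable [MeasurableSpace E] [OpensMeasurableSpace E] {μ : Measure E} [IsFiniteMeasureOnCompacts μ]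

lemma integrable (hf : IsTestFunction Ω f) : Integrable f μ :=
  hf.continuous.integrable_of_hasCompactSupport hf.hasCompactSupport

lemma integral_sq_pos [μ.IsOpenPosMeasure] (hf : IsTestFunction Ω f) (hne : f ≠ 0) :
    0 < ∫ x, f x ^ 2 ∂μ := by
  obtain ⟨x, hx⟩ := Function.ne_iff.1 hne
  exact hf.sq.continuous.integral_pos_of_hasCompactSupport_nonneg_nonzero
    hf.sq.hasCompactSupport (fun y => sq_nonneg (f y)) (pow_ne_zero 2 hx)

end Basic

lemma exists_ne_zero {E : Type*} [NormedAddCommGroup E] [NormedSpace ℝ E] [FiniteDimensional ℝ E]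
    {Ω : Set E} (hΩ : IsOpen Ω) (hne : Ω.Nonempty) : ∃ f, IsTestFunction Ω f ∧ f ≠ 0 := by
  obtain ⟨x, hx⟩ := hne
  obtain ⟨f, hsupp, hcpt, hsmooth, -, hfx⟩ :=
    exists_contDiff_tsupport_subset (n := ⊤) (hΩ.mem_nhds hx)
  exact ⟨f, ⟨hsmooth, hcpt, hsupp⟩, fun h => by simp [h] at hfx⟩

section Integral

variable {E : Type*} [NormedAddCommGroup E] [NormedSpace ℝ E] [FiniteDimensional ℝ E]
  [MeasurableSpace E] [BorelSpace E] {μ : Measure E} [μ.IsAddHaarMeasure]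
  {Ω : Set E} {f g : E → ℝ}

lemma integral_mul_dirDeriv (hf : IsTestFunction Ω f) (hg : IsTestFunction Ω g) (v : E) :
    ∫ x, f x * dirDeriv v g x ∂μ = -∫ x, dirDeriv v f x * g x ∂μ :=
  integral_mul_fderiv_eq_neg_fderiv_mul_of_integrable ((hf.dirDeriv v).mul hg).integrable
    (hf.mul (hg.dirDeriv v)).integrable (hf.mul hg).integrable
    (fun x _ => hf.differentiable x) (fun x _ => hg.differentiable x)

lemma integral_dirDeriv_dirDeriv_mul (hf : IsTestFunction Ω f) (v w : E) :
    ∫ x, dirDeriv v (dirDeriv v f) x * dirDeriv w (dirDeriv w f) x ∂μ =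
      ∫ x, dirDeriv w (dirDeriv v f) x ^ 2 ∂μ := by
  have hv := hf.dirDeriv v
  have hw := hf.dirDeriv w
  calc ∫ x, dirDeriv v (dirDeriv v f) x * dirDeriv w (dirDeriv w f) x ∂μ
    _ = -∫ x, dirDeriv v f x * dirDeriv v (dirDeriv w (dirDeriv w f)) x ∂μ := by
      rw [hv.integral_mul_dirDeriv (hw.dirDeriv w), neg_neg]
    _ = -∫ x, dirDeriv v f x * dirDeriv w (dirDeriv w (dirDeriv v f)) x ∂μ := by
      rw [dirDeriv_comm hw.contDiff_two, dirDeriv_comm hf.contDiff_two]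
    _ = ∫ x, dirDeriv w (dirDeriv v f) x ^ 2 ∂μ := by
      simp_rw [hv.integral_mul_dirDeriv (hv.dirDeriv w), neg_neg, pow_two]

end Integral

section Product

variable {E F : Type*} [NormedAddCommGroup E] [NormedSpace ℝ E] [NormedAddCommGroup F]
  [NormedSpace ℝ F] {S : Set E} {T : Set F} {f : E × F → ℝ}

lemma slice_fst (hf : IsTestFunction (S ×ˢ T) f) (y : F) :
    IsTestFunction S (fun x => f (x, y)) := by
  have hcont : Continuous fun x : E => (x, y) := by fun_prop
  have hsub := tsupport_comp_subset_preimage f hcont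
  refine ⟨hf.contDiff.comp (by fun_prop), ?_, fun x hx => (hf.tsupport_subset (hsub hx)).1⟩
  exact (hf.hasCompactSupport.isCompact.image continuous_fst).of_isClosed_subset
    (isClosed_tsupport _) fun x hx => ⟨(x, y), hsub hx, rfl⟩

end Product

section Line

variable {a b : ℝ} {f : ℝ → ℝ}

protected lemma deriv {Ω : Set ℝ} (hf : IsTestFunction Ω f) : IsTestFunction Ω (deriv f) :=
  dirDeriv_one_eq_deriv f ▸ hf.dirDeriv 1

lemma intervalIntegral_eq_integral (hf : IsTestFunction (Set.Ioo a b) f) :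
    ∫ x in a..b, f x = ∫ x, f x :=
  intervalIntegral.integral_eq_integral_of_support_subset <|
    (subset_tsupport f).trans <| hf.tsupport_subset.trans Set.Ioo_subset_Ioc_self

lemma comp_mul_left {L : ℝ} (hL : 0 < L) (hf : IsTestFunction (Set.Ioo a b) f) :
    IsTestFunction (Set.Ioo (a / L) (b / L)) (fun x => f (L * x)) := by
  rw [← Set.preimage_const_mul_Ioo₀ a b hL]
  exact hf.comp_continuousLinearEquiv (.smulLeft (Units.mk0 L hL.ne'))

end Line

end IsTestFunction

section Riccati

variable {E : Type*} [NormedAddCommGroup E] [NormedSpace ℝ E] {Ω : Set E} {v w : E} {κ η : ℝ}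
  {c d f : E → ℝ}

/-- `c` is a smooth solution on `Ω` of the Riccati equation `∂ᵥc + c² = -κ`. The basic example is
`c = ∂ᵥφ / φ`, where `φ` has no zeros and `∂ᵥ∂ᵥφ = -κ φ`. -/
structure IsRiccatiSolution (Ω : Set E) (v : E) (κ : ℝ) (c : E → ℝ) : Prop where
  contDiffOn : ContDiffOn ℝ ∞ c Ω
  dirDeriv_add_sq : ∀ x ∈ Ω, dirDeriv v c x + c x ^ 2 = -κ

/-- The first-order operator `∂ᵥ - c`. When `c` solves the Riccati equation with constant `κ`, it
factorizes the shifted Laplacian: `(∂ᵥ - c)* (∂ᵥ - c) = -∂ᵥ∂ᵥ - κ`. -/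
def twistedDeriv (v : E) (c f : E → ℝ) : E → ℝ := fun x => dirDeriv v f x - c x * f x

lemma IsTestFunction.twistedDeriv (hf : IsTestFunction Ω f) (hΩ : IsOpen Ω) (v : E)
    (hc : ContDiffOn ℝ ∞ c Ω) : IsTestFunction Ω (twistedDeriv v c f) :=
  (hf.dirDeriv v).sub (hf.contDiffOn_mul hΩ hc)

lemma dirDeriv_twistedDeriv (hf : IsTestFunction Ω f) (hΩ : IsOpen Ω)
    (hd : ContDiffOn ℝ ∞ d Ω) (hdv : ∀ x ∈ Ω, dirDeriv v d x = 0) :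
    dirDeriv v (twistedDeriv w d f) = twistedDeriv w d (dirDeriv v f) := by
  ext x
  by_cases hx : x ∈ Ω
  · have hdx : DifferentiableAt ℝ d x :=
      (hd.contDiffAt (hΩ.mem_nhds hx)).differentiableAt (by simp)
    unfold twistedDeriv
    rw [dirDeriv_sub v ((hf.dirDeriv w).differentiable x)
        ((hf.contDiffOn_mul hΩ hd).differentiable x),
      dirDeriv_mul v hdx (hf.differentiable x), hdv x hx, dirDeriv_comm hf.contDiff_two]
    ring
  · rw [((hf.twistedDeriv hΩ w hd).dirDeriv v).eq_zero_of_notMem hx,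
      ((hf.dirDeriv v).twistedDeriv hΩ w hd).eq_zero_of_notMem hx]

lemma twistedDeriv_sq (hf : IsTestFunction Ω f) (hΩ : IsOpen Ω)
    (hc : IsRiccatiSolution Ω v κ c) (x : E) :
    twistedDeriv v c f x ^ 2 = dirDeriv v f x ^ 2 - κ * f x ^ 2 -
      (f x * dirDeriv v (fun y => c y * f y) x + dirDeriv v f x * (c x * f x)) := by
  unfold twistedDeriv
  by_cases hx : x ∈ Ω
  · have hcx : DifferentiableAt ℝ c x :=
      (hc.contDiffOn.contDiffAt (hΩ.mem_nhds hx)).differentiableAt (by simp)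
    rw [dirDeriv_mul v hcx (hf.differentiable x)]
    linear_combination f x ^ 2 * hc.dirDeriv_add_sq x hx
  · simp [hf.eq_zero_of_notMem hx, (hf.dirDeriv v).eq_zero_of_notMem hx]

variable [FiniteDimensional ℝ E] [MeasurableSpace E] [BorelSpace E] {μ : Measure E}
  [μ.IsAddHaarMeasure]

lemma integral_twistedDeriv_sq (hf : IsTestFunction Ω f) (hΩ : IsOpen Ω)
    (hc : IsRiccatiSolution Ω v κ c) :
    ∫ x, twistedDeriv v c f x ^ 2 ∂μ =
      (∫ x, dirDeriv v f x ^ 2 ∂μ) - κ * ∫ x, f x ^ 2 ∂μ := by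
  have hcf := hf.contDiffOn_mul hΩ hc.contDiffOn
  have hfv := hf.dirDeriv v
  have hκ : Integrable (fun x => κ * f x ^ 2) μ := hf.sq.integrable.const_mul κ
  have hshift : Integrable (fun x => dirDeriv v f x ^ 2 - κ * f x ^ 2) μ :=
    hfv.sq.integrable.sub hκ
  have hleft : Integrable (fun x => f x * dirDeriv v (fun y => c y * f y) x) μ :=
    (hf.mul (hcf.dirDeriv v)).integrable
  have hright : Integrable (fun x => dirDeriv v f x * (c x * f x)) μ := (hfv.mul hcf).integrable
  simp_rw [twistedDeriv_sq hf hΩ hc]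
  rw [integral_sub hshift (hleft.fun_add hright),
    integral_sub hfv.sq.integrable hκ, integral_add hleft hright,
    hf.integral_mul_dirDeriv hcf, neg_add_cancel, sub_zero, integral_const_mul]

lemma mul_integral_sq_le_integral_dirDeriv_sq (hf : IsTestFunction Ω f) (hΩ : IsOpen Ω)
    (hc : IsRiccatiSolution Ω v κ c) :
    κ * ∫ x, f x ^ 2 ∂μ ≤ ∫ x, dirDeriv v f x ^ 2 ∂μ := by
  rw [← sub_nonneg, ← integral_twistedDeriv_sq hf hΩ hc]
  exact integral_nonneg fun x => sq_nonneg _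

lemma le_integral_dirDeriv_dirDeriv_sq (hf : IsTestFunction Ω f) (hΩ : IsOpen Ω)
    (hc : IsRiccatiSolution Ω v κ c) (hd : IsRiccatiSolution Ω w η d)
    (hdv : ∀ x ∈ Ω, dirDeriv v d x = 0) :
    η * (∫ x, dirDeriv v f x ^ 2 ∂μ) + κ * (∫ x, dirDeriv w f x ^ 2 ∂μ) -
      κ * η * (∫ x, f x ^ 2 ∂μ) ≤ ∫ x, dirDeriv w (dirDeriv v f) x ^ 2 ∂μ := by
  have h := mul_integral_sq_le_integral_dirDeriv_sq (μ := μ)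
    (hf.twistedDeriv hΩ w hd.contDiffOn) hΩ hc
  rw [dirDeriv_twistedDeriv hf hΩ hd.contDiffOn hdv, integral_twistedDeriv_sq hf hΩ hd,
    integral_twistedDeriv_sq (hf.dirDeriv v) hΩ hd] at h
  linarith

end Riccati

section Cotangent

variable {k x : ℝ}

/-- The function `k cot (k x)`, the logarithmic derivative of `sin (k x)`. -/
def scaledCot (k x : ℝ) : ℝ := k * (cos (k * x) / sin (k * x))

lemma contDiffAt_scaledCot (h : sin (k * x) ≠ 0) : ContDiffAt ℝ ∞ (scaledCot k) x :=
  contDiffAt_const.mul <| ContDiffAt.div (by fun_prop) (by fun_prop) h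

lemma deriv_scaledCot (h : sin (k * x) ≠ 0) :
    deriv (scaledCot k) x = -k ^ 2 - scaledCot k x ^ 2 := by
  have hlin : HasDerivAt (fun y : ℝ => k * y) k x := by simpa using (hasDerivAt_id x).const_mul k
  refine (((hlin.cos.div hlin.sin h).const_mul k).congr_deriv ?_).deriv
  unfold scaledCot
  field_simp

lemma sin_pi_div_mul_pos {A : ℝ} (hx : x ∈ Set.Ioo 0 A) : 0 < sin (π / A * x) := by
  have hA : 0 < A := hx.1.trans hx.2
  refine sin_pos_of_pos_of_lt_pi (mul_pos (by positivity) hx.1) ?_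
  rw [div_mul_eq_mul_div, div_lt_iff₀ hA]
  exact mul_lt_mul_of_pos_left hx.2 pi_pos

variable {E : Type*} [NormedAddCommGroup E] [NormedSpace ℝ E] {Ω : Set E} {ℓ : E →L[ℝ] ℝ}

lemma isRiccatiSolution_scaledCot_comp {v : E} (hv : ℓ v = 1)
    (hsin : ∀ x ∈ Ω, sin (k * ℓ x) ≠ 0) :
    IsRiccatiSolution Ω v (k ^ 2) (scaledCot k ∘ ℓ) where
  contDiffOn x hx :=
    ((contDiffAt_scaledCot (hsin x hx)).comp x ℓ.contDiff.contDiffAt).contDiffWithinAt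
  dirDeriv_add_sq x hx := by
    have hdiff := (contDiffAt_scaledCot (hsin x hx)).differentiableAt (by simp)
    rw [dirDeriv_comp_continuousLinearMap v hdiff, hv, deriv_scaledCot (hsin x hx),
      Function.comp_apply]
    ring

end Cotangent

section Rectangle

variable {A B : ℝ} {u : ℝ × ℝ → ℝ}

lemma IsTestFunction.le_integral_uxy_sq (hu : IsTestFunction (Set.Ioo 0 A ×ˢ Set.Ioo 0 B) u) :
    (π / B) ^ 2 * (∫ p, pd (1, 0) u p ^ 2) + (π / A) ^ 2 * (∫ p, pd (0, 1) u p ^ 2) -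
      (π / A) ^ 2 * (π / B) ^ 2 * (∫ p, u p ^ 2) ≤ ∫ p, uxy u p ^ 2 := by
  have hA (p) (hp : p ∈ Set.Ioo 0 A ×ˢ Set.Ioo 0 B) : sin (π / A * p.1) ≠ 0 :=
    (sin_pi_div_mul_pos hp.1).ne'
  have hB (p) (hp : p ∈ Set.Ioo 0 A ×ˢ Set.Ioo 0 B) : sin (π / B * p.2) ≠ 0 :=
    (sin_pi_div_mul_pos hp.2).ne'
  refine le_integral_dirDeriv_dirDeriv_sq hu (isOpen_Ioo.prod isOpen_Ioo)
    (isRiccatiSolution_scaledCot_comp (ℓ := .fst ℝ ℝ ℝ) (v := (1, 0)) rfl hA)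
    (isRiccatiSolution_scaledCot_comp (ℓ := .snd ℝ ℝ ℝ) (v := (0, 1)) rfl hB) fun p hp => ?_
  rw [dirDeriv_comp_continuousLinearMap _
    ((contDiffAt_scaledCot (hB p hp)).differentiableAt (by simp))]
  simp

lemma IsTestFunction.integral_lap_sq {Ω : Set (ℝ × ℝ)} (hu : IsTestFunction Ω u) :
    ∫ p, lap u p ^ 2 =
      (∫ p, uxx u p ^ 2) + 2 * (∫ p, uxy u p ^ 2) + ∫ p, uyy u p ^ 2 := by
  have hxx : IsTestFunction Ω (uxx u) := (hu.dirDeriv (1, 0)).dirDeriv (1, 0)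
  have hyy : IsTestFunction Ω (uyy u) := (hu.dirDeriv (0, 1)).dirDeriv (0, 1)
  have hxxyy : ∫ p, uxx u p * uyy u p = ∫ p, uxy u p ^ 2 :=
    hu.integral_dirDeriv_dirDeriv_mul (1, 0) (0, 1)
  have hcross : Integrable fun p => 2 * (uxx u p * uyy u p) :=
    (hxx.mul hyy).integrable.const_mul 2
  simp_rw [lap, add_sq, mul_assoc]
  rw [integral_add (hxx.sq.integrable.fun_add hcross) hyy.sq.integrable,
    integral_add hxx.sq.integrable hcross, integral_const_mul, hxxyy]

end Rectangle

section Rho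

variable {α L : ℝ} {f : ℝ → ℝ}

lemma rho_le (hα : 0 ≤ α) (hf : IsTestFunction (Set.Ioo 0 1) f) (hnorm : ∫ x, f x ^ 2 = 1) :
    rho α ≤ (∫ x, deriv (deriv f) x ^ 2) + 2 * α * ∫ x, deriv f x ^ 2 := by
  rw [← hf.sq.intervalIntegral_eq_integral] at hnorm
  rw [← hf.deriv.sq.intervalIntegral_eq_integral,
    ← hf.deriv.deriv.sq.intervalIntegral_eq_integral]
  refine csInf_le ⟨0, ?_⟩ ⟨f, hf, hnorm, rfl⟩
  rintro r ⟨g, -, -, rfl⟩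
  have hnonneg (h : ℝ → ℝ) : 0 ≤ ∫ x in (0 : ℝ)..1, h x ^ 2 :=
    intervalIntegral.integral_nonneg zero_le_one fun x _ => sq_nonneg (h x)
  exact add_nonneg (hnonneg _) (mul_nonneg (by positivity) (hnonneg _))

lemma rho_mul_integral_sq_le (hα : 0 ≤ α) (hf : IsTestFunction (Set.Ioo 0 1) f) :
    rho α * (∫ x, f x ^ 2) ≤
      (∫ x, deriv (deriv f) x ^ 2) + 2 * α * ∫ x, deriv f x ^ 2 := by
  rcases eq_or_ne f 0 with rfl | hne
  · simp
  have hN : 0 < ∫ x, f x ^ 2 := hf.integral_sq_pos hne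
  set N := ∫ x, f x ^ 2
  have hr : (√N)⁻¹ ^ 2 = N⁻¹ := by rw [inv_pow, sq_sqrt hN.le]
  have h := rho_le hα (hf.const_mul (√N)⁻¹)
    (by simp_rw [mul_pow, integral_const_mul, hr]; exact inv_mul_cancel₀ hN.ne')
  simp only [deriv_const_mul_field', mul_pow, integral_const_mul, hr] at h
  rw [← le_div_iff₀ hN]
  exact h.trans_eq (by ring)

lemma integral_comp_mul_left_sq (hL : 0 < L) (g : ℝ → ℝ) :
    ∫ x, g (L * x) ^ 2 = L⁻¹ * ∫ x, g x ^ 2 := by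
  rw [Measure.integral_comp_mul_left (fun x => g x ^ 2) L, abs_of_pos (inv_pos.2 hL),
    smul_eq_mul]

lemma rho_mul_integral_sq_le_Ioo (hα : 0 ≤ α) (hL : 0 < L)
    (hf : IsTestFunction (Set.Ioo 0 L) f) :
    rho α * (∫ x, f x ^ 2) ≤
      L ^ 4 * (∫ x, deriv (deriv f) x ^ 2) + 2 * α * L ^ 2 * ∫ x, deriv f x ^ 2 := by
  have hscaled : IsTestFunction (Set.Ioo 0 1) (fun x => f (L * x)) := by
    simpa only [zero_div, div_self hL.ne'] using hf.comp_mul_left hL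
  have hderiv (g : ℝ → ℝ) : deriv (fun x => g (L * x)) = fun x => L * deriv g (L * x) := by
    ext x
    rw [deriv_comp_mul_left, smul_eq_mul]
  have h := rho_mul_integral_sq_le hα hscaled
  simp only [hderiv, deriv_const_mul_field', mul_pow, integral_const_mul,
    integral_comp_mul_left_sq hL] at h
  refine le_of_mul_le_mul_left ?_ (inv_pos.2 hL)
  linarith

end Rho

section Slices

lemma integral_prod_le_integral_prod {X Y : Type*} [MeasurableSpace X] [MeasurableSpace Y]
    {μ : Measure X} {ν : Measure Y} [SFinite μ] [SFinite ν] {f g : X × Y → ℝ}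
    (hf : Integrable f (μ.prod ν)) (hg : Integrable g (μ.prod ν))
    (hfg : ∀ y, ∫ x, f (x, y) ∂μ ≤ ∫ x, g (x, y) ∂μ) :
    ∫ p, f p ∂μ.prod ν ≤ ∫ p, g p ∂μ.prod ν := by
  rw [integral_prod_symm _ hf, integral_prod_symm _ hg]
  exact integral_mono hf.integral_prod_right hg.integral_prod_right hfg

lemma deriv_slice_fst {u : ℝ × ℝ → ℝ} (hu : Differentiable ℝ u) (y : ℝ) :
    deriv (fun x => u (x, y)) = fun x => pd (1, 0) u (x, y) := by
  ext x
  exact ((hu (x, y)).hasFDerivAt.comp_hasDerivAt x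
    ((hasDerivAt_id x).prodMk (hasDerivAt_const x y))).deriv

variable {A B α : ℝ} {S T : Set ℝ} {u : ℝ × ℝ → ℝ}

lemma rho_mul_integral_sq_le_uxx (hα : 0 ≤ α) (hA : 0 < A)
    (hu : IsTestFunction (Set.Ioo 0 A ×ˢ T) u) :
    rho α * (∫ p, u p ^ 2) ≤
      A ^ 4 * (∫ p, uxx u p ^ 2) + 2 * α * A ^ 2 * ∫ p, pd (1, 0) u p ^ 2 := by
  have hx : IsTestFunction _ (pd (1, 0) u) := hu.dirDeriv (1, 0)
  have hxx : IsTestFunction _ (uxx u) := hx.dirDeriv (1, 0)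
  have hxx_mul : Integrable fun p => A ^ 4 * uxx u p ^ 2 := hxx.sq.integrable.const_mul _
  have hx_mul : Integrable fun p => 2 * α * A ^ 2 * pd (1, 0) u p ^ 2 :=
    hx.sq.integrable.const_mul _
  simp_rw [← integral_const_mul]
  rw [← integral_add hxx_mul hx_mul]
  refine integral_prod_le_integral_prod (hu.sq.integrable.const_mul _)
    (hxx_mul.add hx_mul) fun y => ?_
  have hslice := rho_mul_integral_sq_le_Ioo hα hA (hu.slice_fst y)
  rw [deriv_slice_fst hu.differentiable, deriv_slice_fst hx.differentiable] at hslice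
  rw [integral_add ((hxx.slice_fst y).sq.integrable.const_mul _)
    ((hx.slice_fst y).sq.integrable.const_mul _)]
  simpa only [integral_const_mul, uxx] using hslice

lemma integral_comp_swap_sq (g : ℝ × ℝ → ℝ) : ∫ p, (g ∘ Prod.swap) p ^ 2 = ∫ p, g p ^ 2 :=
  integral_prod_swap fun p => g p ^ 2

lemma pd_fst_comp_swap (g : ℝ × ℝ → ℝ) : pd (1, 0) (g ∘ Prod.swap) = pd (0, 1) g ∘ Prod.swap :=
  dirDeriv_comp_continuousLinearEquiv (.prodComm ℝ ℝ ℝ) (1, 0) g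

lemma rho_mul_integral_sq_le_uyy (hα : 0 ≤ α) (hB : 0 < B)
    (hu : IsTestFunction (S ×ˢ Set.Ioo 0 B) u) :
    rho α * (∫ p, u p ^ 2) ≤
      B ^ 4 * (∫ p, uyy u p ^ 2) + 2 * α * B ^ 2 * ∫ p, pd (0, 1) u p ^ 2 := by
  have hswap : IsTestFunction (Set.Ioo 0 B ×ˢ S) (u ∘ Prod.swap) := by
    rw [← Set.preimage_swap_prod]
    exact hu.comp_continuousLinearEquiv (.prodComm ℝ ℝ ℝ)
  simpa only [uxx, uyy, pd_fst_comp_swap, integral_comp_swap_sq] using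
    rho_mul_integral_sq_le_uxx hα hB hswap

lemma owen_mul_integral_sq_le_integral_lap_sq (hA : 0 < A) (hB : 0 < B)
    (hu : IsTestFunction (Set.Ioo 0 A ×ˢ Set.Ioo 0 B) u) :
    (rho (π ^ 2 * (A / B) ^ 2) / A ^ 4 + rho (π ^ 2 * (B / A) ^ 2) / B ^ 4 -
      2 * π ^ 4 / (A * B) ^ 2) * (∫ p, u p ^ 2) ≤ ∫ p, lap u p ^ 2 := by
  set N := ∫ p, u p ^ 2
  have hx : rho (π ^ 2 * (A / B) ^ 2) / A ^ 4 * N ≤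
      (∫ p, uxx u p ^ 2) + 2 * ((π / B) ^ 2 * ∫ p, pd (1, 0) u p ^ 2) := by
    rw [div_mul_eq_mul_div, div_le_iff₀ (by positivity)]
    refine (rho_mul_integral_sq_le_uxx (by positivity) hA hu).trans_eq ?_
    field_simp
  have hy : rho (π ^ 2 * (B / A) ^ 2) / B ^ 4 * N ≤
      (∫ p, uyy u p ^ 2) + 2 * ((π / A) ^ 2 * ∫ p, pd (0, 1) u p ^ 2) := by
    rw [div_mul_eq_mul_div, div_le_iff₀ (by positivity)]
    refine (rho_mul_integral_sq_le_uyy (by positivity) hB hu).trans_eq ?_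
    field_simp
  have hxy := hu.le_integral_uxy_sq
  have hconst : 2 * π ^ 4 / (A * B) ^ 2 * N = 2 * ((π / A) ^ 2 * (π / B) ^ 2 * N) := by
    field_simp
  rw [hu.integral_lap_sq, sub_mul, add_mul]
  linarith

end Slices

lemma le_lam1 {a m : ℝ} (ha : 0 < a)
    (hm : ∀ u, IsTestFunction (Rect a) u → m * (∫ p, u p ^ 2) ≤ ∫ p, lap u p ^ 2) :
    m ≤ lam1 a := by
  have hne : (Rect a).Nonempty :=
    (Set.nonempty_Ioo.2 ha).prod (Set.nonempty_Ioo.2 (one_div_pos.2 ha))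
  obtain ⟨u₀, hu₀, hu₀_ne⟩ := IsTestFunction.exists_ne_zero (isOpen_Ioo.prod isOpen_Ioo) hne
  refine le_csInf ⟨_, u₀, hu₀, hu₀_ne, rfl⟩ ?_
  rintro _ ⟨u, hu, hu_ne, rfl⟩
  rw [le_div_iff₀ (IsTestFunction.integral_sq_pos hu hu_ne)]
  exact hm u hu

theorem first_eigenvalue_owen_lower_bound_general (a : ℝ) (ha : 0 < a) :
    lam1 a ≥ rho (π ^ 2 * a ^ 4) * a ^ (-4 : ℤ)
      + rho (π ^ 2 * a ^ (-4 : ℤ)) * a ^ 4 - 2 * π ^ 4 := by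
  refine le_lam1 ha fun u hu => ?_
  have h := owen_mul_integral_sq_le_integral_lap_sq ha (one_div_pos.2 ha) hu
  have hpow : (a / (1 / a)) ^ 2 = a ^ 4 := by field_simp
  have hinv : (1 / a / a) ^ 2 = a ^ (-4 : ℤ) := by field_simp
  have hB : rho (π ^ 2 * a ^ (-4 : ℤ)) / (1 / a) ^ 4 = rho (π ^ 2 * a ^ (-4 : ℤ)) * a ^ 4 := by
    field_simp
  rwa [hpow, hinv, hB, mul_one_div_cancel ha.ne', one_pow, div_one, div_eq_mul_inv,
    ← zpow_natCast a 4, ← zpow_neg] at h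

/-- Owen's lower bound: `λ₁(a) ≥ ρ(π²a⁴)a⁻⁴ + ρ(π²a⁻⁴)a⁴ − 2π⁴` for `a ≥ 1`. -/
theorem first_eigenvalue_owen_lower_bound (a : ℝ) (ha : 1 ≤ a) :
    lam1 a ≥ rho (π ^ 2 * a ^ 4) * a ^ (-4 : ℤ)
      + rho (π ^ 2 * a ^ (-4 : ℤ)) * a ^ 4 - 2 * π ^ 4 :=
  first_eigenvalue_owen_lower_bound_general a (zero_lt_one.trans_le ha)
end
end

section
/- The function L(a) = ρ(π²a⁴)·a⁻⁴ + ρ(π²a⁻⁴)·a⁴ − 2π⁴ is strictly increasing in a for a > 1: if 1 < a < b then L(a) < L(b). -/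
open MeasureTheory Real Filter

noncomputable section


/-- The function `L(a) = ρ(π²a⁴)a⁻⁴ + ρ(π²a⁻⁴)a⁴ − 2π⁴`. -/
def Lfun (a : ℝ) : ℝ :=
  rho (π ^ 2 * a ^ 4) * a ^ (-4 : ℤ) + rho (π ^ 2 * a ^ (-4 : ℤ)) * a ^ 4 - 2 * π ^ 4

/-!
Up to a constant, `Lfun a` is `π²` times the sum of the values of `x ↦ ρ(eˣ) / eˣ` at the points
`log π² ± 4 log a`, so it suffices that this function is strictly convex.

If `y > 0` is an eigenfunction for the eigenvalue `μ`, substituting `v = y u` in the quadratic form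
leaves `μ ∫ v²` plus an integral that is nonnegative as soon as its potential is, and then `ρ = μ`.
The explicit even mode of the clamped beam gives in this way `ρ(2 (q² - p²)) = 16 p² q²` on the
curve `q tanh q = -p tan p`, `p ∈ (π/2, π)`. Parametrised by the common value `t` of the two sides,
this curve has explicit logarithmic derivatives, and the slope of `p² q² / (q² - p²)` against
`log (q² - p²)` turns out to be strictly increasing in `t`.
-/

open Set Topology
open scoped ContDiff

section Calculus

lemma hasDerivAt_invFunOn {f : ℝ → ℝ} {s : Set ℝ} {f' a : ℝ} (hf : HasStrictDerivAt f f' a)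
    (hf' : f' ≠ 0) (hinj : InjOn f s) (hs : s ∈ 𝓝 a) :
    HasDerivAt (Function.invFunOn f s) f'⁻¹ (f a) := by
  set g := hf.localInverse f f' a hf'
  have hg : HasDerivAt g f'⁻¹ (f a) := (hf.to_localInverse hf').hasDerivAt
  have hga : g (f a) = a := (hf.eventually_left_inverse hf').self_of_nhds
  have hgs : ∀ᶠ t in 𝓝 (f a), g t ∈ s := hg.continuousAt.eventually_mem (by rwa [hga])
  refine hg.congr_of_eventuallyEq ?_
  filter_upwards [hf.eventually_right_inverse hf', hgs] with t hft ht
  nth_rw 1 [← hft]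
  exact hinj.leftInvOn_invFunOn ht

lemma abs_le_mul_pow_succ_of_abs_deriv_le {f : ℝ → ℝ} (hf : Differentiable ℝ f) {a x B : ℝ}
    (ha : f a = 0) (hB : 0 ≤ B) {k : ℕ} (hf' : ∀ z ∈ uIcc a x, |deriv f z| ≤ B * |z - a| ^ k) :
    |f x| ≤ B * |x - a| ^ (k + 1) := by
  have hbound : ∀ z ∈ uIcc a x, ‖deriv f z‖ ≤ B * |x - a| ^ k := fun z hz =>
    (hf' z hz).trans (by have := abs_sub_left_of_mem_uIcc hz; gcongr)
  have := (convex_uIcc a x).norm_image_sub_le_of_norm_deriv_le (fun z _ => hf z) hbound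
    left_mem_uIcc right_mem_uIcc
  rwa [ha, sub_zero, norm_eq_abs, norm_eq_abs, mul_assoc, ← pow_succ] at this

/-- Cauchy's mean value theorem turns chord slopes of the curve `(X t, Y t)` into values of its
slope `m`. -/
lemma strictConvexOn_image_of_parametric {f X X' Y m : ℝ → ℝ} {s : Set ℝ} (hs : s.OrdConnected)
    (hX : ∀ t ∈ s, HasDerivAt X (X' t) t) (hX' : ∀ t ∈ s, 0 < X' t)
    (hY : ∀ t ∈ s, HasDerivAt Y (m t * X' t) t) (hm : StrictMonoOn m s)
    (hf : ∀ t ∈ s, f (X t) = Y t) : StrictConvexOn ℝ (X '' s) f := by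
  have hXc : ContinuousOn X s := fun t ht => (hX t ht).continuousAt.continuousWithinAt
  have hmono : StrictMonoOn X s :=
    strictMonoOn_of_deriv_pos hs.convex hXc fun t ht => by
      rw [(hX t (interior_subset ht)).deriv]
      exact hX' t (interior_subset ht)
  have hchord : ∀ {t₁ t₂}, t₁ ∈ s → t₂ ∈ s → t₁ < t₂ →
      ∃ t ∈ Ioo t₁ t₂, (f (X t₂) - f (X t₁)) / (X t₂ - X t₁) = m t := by
    intro t₁ t₂ h₁ h₂ hlt
    have hsub : Icc t₁ t₂ ⊆ s := hs.out h₁ h₂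
    obtain ⟨t, ht, e⟩ := exists_ratio_hasDerivAt_eq_ratio_slope X X' hlt (hXc.mono hsub)
      (fun t ht => hX t (hsub (Ioo_subset_Icc_self ht))) Y _
      (fun t ht => (hY t (hsub ht)).continuousAt.continuousWithinAt)
      (fun t ht => hY t (hsub (Ioo_subset_Icc_self ht)))
    refine ⟨t, ht, ?_⟩
    rw [hf _ h₁, hf _ h₂, div_eq_iff (sub_pos.2 (hmono h₁ h₂ hlt)).ne']
    refine mul_right_cancel₀ (hX' t (hsub (Ioo_subset_Icc_self ht))).ne' ?_
    linear_combination e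
  have hconv : Convex ℝ (X '' s) := (hs.isPreconnected.image X hXc).ordConnected.convex
  refine strictConvexOn_of_slope_strict_mono_adjacent hconv ?_
  rintro _ y _ ⟨t₁, h₁, rfl⟩ ⟨t₃, h₃, rfl⟩ hxy hyz
  obtain ⟨t₂, h₂, rfl⟩ : y ∈ X '' s :=
    (hconv.ordConnected.out (mem_image_of_mem X h₁) (mem_image_of_mem X h₃)) ⟨hxy.le, hyz.le⟩
  have h₁₂ : t₁ < t₂ := (hmono.lt_iff_lt h₁ h₂).1 hxy
  have h₂₃ : t₂ < t₃ := (hmono.lt_iff_lt h₂ h₃).1 hyz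
  obtain ⟨u, hu, eu⟩ := hchord h₁ h₂ h₁₂
  obtain ⟨v, hv, ev⟩ := hchord h₂ h₃ h₂₃
  rw [eu, ev]
  exact hm (hs.out h₁ h₂ (Ioo_subset_Icc_self hu)) (hs.out h₂ h₃ (Ioo_subset_Icc_self hv))
    (hu.2.trans hv.1)

lemma strictMonoOn_add_symm_of_strictConvexOn {f : ℝ → ℝ} (hf : StrictConvexOn ℝ univ f) (m : ℝ) :
    StrictMonoOn (fun x => f (m + x) + f (m - x)) (Ici 0) := by
  intro x hx y _ hxy
  have hx0 : 0 ≤ x := hx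
  have hy0 : 0 < y := hx0.trans_lt hxy
  have hne : m + y ≠ m - y := by linarith
  have hθ : 0 < (y + x) / (2 * y) := by positivity
  have hη : 0 < (y - x) / (2 * y) := div_pos (sub_pos.2 hxy) (by positivity)
  have hsum : (y + x) / (2 * y) + (y - x) / (2 * y) = 1 := by field_simp; ring
  have h₁ := hf.2 (mem_univ (m + y)) (mem_univ (m - y)) hne hθ hη hsum
  have h₂ := hf.2 (mem_univ (m + y)) (mem_univ (m - y)) hne hη hθ (by rwa [add_comm])
  simp only [smul_eq_mul] at h₁ h₂
  have e₁ : (y + x) / (2 * y) * (m + y) + (y - x) / (2 * y) * (m - y) = m + x := by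
    field_simp; ring
  have e₂ : (y - x) / (2 * y) * (m + y) + (y + x) / (2 * y) * (m - y) = m - x := by
    field_simp; ring
  rw [e₁] at h₁
  rw [e₂] at h₂
  linear_combination h₁ + h₂ + (f (m + y) + f (m - y)) * hsum

lemma tendsto_integral_sq_of_eventually_eq {a b B : ℝ} (hab : a ≤ b) {f : ℕ → ℝ → ℝ} {g : ℝ → ℝ}
    (hf : ∀ n, Continuous (f n)) (hB : ∀ n, ∀ x ∈ Ioo a b, |f n x| ≤ B)
    (hfg : ∀ x ∈ Ioo a b, ∀ᶠ n in atTop, f n x = g x) :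
    Tendsto (fun n => ∫ x in a..b, f n x ^ 2) atTop (𝓝 (∫ x in a..b, g x ^ 2)) := by
  simp only [intervalIntegral.integral_of_le hab, integral_Ioc_eq_integral_Ioo]
  refine tendsto_integral_of_dominated_convergence (fun _ => B ^ 2)
    (fun n => ((hf n).pow 2).aestronglyMeasurable) (by simp) (fun n => ?_) ?_
  · filter_upwards [ae_restrict_mem measurableSet_Ioo] with x hx
    rw [norm_pow, norm_eq_abs]
    gcongr
    exact hB n x hx
  · filter_upwards [ae_restrict_mem measurableSet_Ioo] with x hx
    exact tendsto_const_nhds.congr' ((hfg x hx).mono fun n hn => by simp only [hn])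

lemma abs_mul_le_of_abs_le_mul {s χ w C M : ℝ} (hC : 0 ≤ C) (hw : 0 ≤ w) (hs : |s| ≤ C * w)
    (hχ : |w * χ| ≤ M) : |s * χ| ≤ C * M := by
  calc |s * χ| ≤ C * w * |χ| := by rw [abs_mul]; gcongr
    _ = C * |w * χ| := by rw [abs_mul w, abs_of_nonneg hw, mul_assoc]
    _ ≤ C * M := by gcongr

lemma deriv_mul_eq {f g : ℝ → ℝ} (hf : Differentiable ℝ f) (hg : Differentiable ℝ g) :
    (deriv fun x => f x * g x) = fun x => deriv f x * g x + f x * deriv g x :=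
  funext fun x => deriv_fun_mul (hf x) (hg x)

lemma deriv_deriv_mul_eq {f g : ℝ → ℝ} (hf : ContDiff ℝ 2 f) (hg : ContDiff ℝ 2 g) :
    deriv (deriv fun x => f x * g x) = fun x =>
      deriv (deriv f) x * g x + 2 * (deriv f x * deriv g x) + f x * deriv (deriv g) x := by
  have hf₁ := hf.differentiable two_ne_zero
  have hg₁ := hg.differentiable two_ne_zero
  have hf₂ := hf.differentiable_deriv_two
  have hg₂ := hg.differentiable_deriv_two
  rw [deriv_mul_eq hf₁ hg₁]
  ext x
  rw [deriv_fun_add ((hf₂ x).fun_mul (hg₁ x)) ((hf₁ x).fun_mul (hg₂ x)),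
    deriv_fun_mul (hf₂ x) (hg₁ x), deriv_fun_mul (hf₁ x) (hg₂ x)]
  ring

end Calculus

section Approximation

/-- The step `t ↦ smoothTransition (t - 1)`, which is `0` for `t ≤ 1` and `1` for `2 ≤ t`. -/
def smoothStep (t : ℝ) : ℝ := smoothTransition (t - 1)

lemma contDiff_smoothStep : ContDiff ℝ ∞ smoothStep :=
  smoothTransition.contDiff.comp (contDiff_id.sub contDiff_const)

lemma smoothStep_of_le_one {t : ℝ} (ht : t ≤ 1) : smoothStep t = 0 :=
  smoothTransition.zero_of_nonpos (by linarith)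

lemma smoothStep_of_two_le {t : ℝ} (ht : 2 ≤ t) : smoothStep t = 1 :=
  smoothTransition.one_of_one_le (by linarith)

lemma abs_smoothStep_le_one (t : ℝ) : |smoothStep t| ≤ 1 :=
  abs_le.2 ⟨neg_one_lt_zero.le.trans (smoothTransition.nonneg _), smoothTransition.le_one _⟩

lemma hasCompactSupport_deriv_smoothStep : HasCompactSupport (deriv smoothStep) := by
  refine HasCompactSupport.intro (isCompact_Icc (a := (1 : ℝ)) (b := 2)) fun t ht => ?_
  rw [mem_Icc, not_and_or, not_le, not_le] at ht
  rcases ht with ht | ht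
  · have : smoothStep =ᶠ[𝓝 t] fun _ => 0 := by
      filter_upwards [Iio_mem_nhds ht] with z hz using smoothStep_of_le_one (le_of_lt hz)
    simpa using this.deriv_eq
  · have : smoothStep =ᶠ[𝓝 t] fun _ => 1 := by
      filter_upwards [Ioi_mem_nhds ht] with z hz using smoothStep_of_two_le (le_of_lt hz)
    simpa using this.deriv_eq

/-- Cutoff functions exhausting `(0,1)`: `cutoff n` vanishes where `n x (1 - x) ≤ 1` and equals `1`
where `2 ≤ n x (1 - x)`. -/
def cutoff (n : ℕ) (x : ℝ) : ℝ := smoothStep (n * (x * (1 - x)))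

lemma contDiff_cutoff (n : ℕ) : ContDiff ℝ ∞ (cutoff n) :=
  contDiff_smoothStep.comp (by fun_prop)

lemma eventually_cutoff_eventuallyEq_one {x : ℝ} (hx : x ∈ Ioo (0 : ℝ) 1) :
    ∀ᶠ n in atTop, cutoff n =ᶠ[𝓝 x] fun _ => 1 := by
  have hw : 0 < x * (1 - x) := mul_pos hx.1 (sub_pos.2 hx.2)
  have htend : Tendsto (fun n : ℕ => n * (x * (1 - x))) atTop atTop :=
    tendsto_natCast_atTop_atTop.atTop_mul_const hw
  filter_upwards [htend.eventually_gt_atTop 2] with n hn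
  have hcont : ContinuousAt (fun z : ℝ => n * (z * (1 - z))) x := by fun_prop
  filter_upwards [hcont.eventually_const_lt hn] with z hz using smoothStep_of_two_le hz.le

lemma hasDerivAt_mul_mul_one_sub (n x : ℝ) :
    HasDerivAt (fun x => n * (x * (1 - x))) (n * (1 - 2 * x)) x :=
  (((hasDerivAt_id' x).fun_mul ((hasDerivAt_id' x).const_sub 1)).const_mul n).congr_deriv (by ring)

lemma deriv_cutoff (n : ℕ) : deriv (cutoff n) =
    fun x => deriv smoothStep (n * (x * (1 - x))) * (n * (1 - 2 * x)) :=
  funext fun x => (HasDerivAt.comp x (contDiff_smoothStep.differentiable (by simp) _).hasDerivAt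
    (hasDerivAt_mul_mul_one_sub n x)).deriv

lemma deriv_deriv_cutoff (n : ℕ) : deriv (deriv (cutoff n)) =
    fun x => deriv (deriv smoothStep) (n * (x * (1 - x))) * (n * (1 - 2 * x)) ^ 2 -
      deriv smoothStep (n * (x * (1 - x))) * (2 * n) := by
  rw [deriv_cutoff]
  ext x
  have hlin : HasDerivAt (fun x : ℝ => n * (1 - 2 * x)) (-(2 * n)) x :=
    ((((hasDerivAt_id' x).const_mul 2).const_sub 1).const_mul (n : ℝ)).congr_deriv (by ring)
  have hstep : HasDerivAt (fun x : ℝ => deriv smoothStep (n * (x * (1 - x)))) _ x :=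
    HasDerivAt.comp x ((contDiff_infty_iff_deriv.1 contDiff_smoothStep).2.differentiable
      (by simp) _).hasDerivAt (hasDerivAt_mul_mul_one_sub n x)
  exact ((hstep.fun_mul hlin).congr_deriv (by ring)).deriv

lemma exists_abs_mul_deriv_smoothStep_le : ∃ M, ∀ t,
    |t * deriv smoothStep t| ≤ M ∧ |t ^ 2 * deriv (deriv smoothStep) t| ≤ M := by
  have hS' : ContDiff ℝ ∞ (deriv smoothStep) := (contDiff_infty_iff_deriv.1 contDiff_smoothStep).2
  obtain ⟨M₁, hM₁⟩ := (continuous_id.mul hS'.continuous).bounded_above_of_compact_support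
    hasCompactSupport_deriv_smoothStep.mul_left
  obtain ⟨M₂, hM₂⟩ := ((continuous_pow 2).mul
    (contDiff_infty_iff_deriv.1 hS').2.continuous).bounded_above_of_compact_support
    hasCompactSupport_deriv_smoothStep.deriv.mul_left
  exact ⟨max M₁ M₂, fun t => ⟨(hM₁ t).trans (le_max_left _ _), (hM₂ t).trans (le_max_right _ _)⟩⟩

lemma exists_abs_weight_mul_deriv_cutoff_le : ∃ M, ∀ (n : ℕ), ∀ x ∈ Ioo (0 : ℝ) 1,
    |cutoff n x| ≤ M ∧ |x * (1 - x) * deriv (cutoff n) x| ≤ M ∧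
    |(x * (1 - x)) ^ 2 * deriv (deriv (cutoff n)) x| ≤ M := by
  obtain ⟨M, hM⟩ := exists_abs_mul_deriv_smoothStep_le
  have hM0 : 0 ≤ M := (abs_nonneg _).trans (hM 0).1
  refine ⟨1 + 3 * M, fun n x hx => ?_⟩
  rw [deriv_deriv_cutoff, deriv_cutoff]
  simp only
  set w : ℝ := x * (1 - x)
  have hw0 : 0 < w := mul_pos hx.1 (sub_pos.2 hx.2)
  have hw1 : w ≤ 1 := by nlinarith [hx.1, hx.2]
  have hw' : |1 - 2 * x| ≤ 1 := abs_le.2 ⟨by linarith [hx.2], by linarith [hx.1]⟩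
  obtain ⟨h₁, h₂⟩ := hM (n * w)
  refine ⟨(abs_smoothStep_le_one _).trans (by linarith), ?_, ?_⟩
  · calc |w * (deriv smoothStep (n * w) * (n * (1 - 2 * x)))|
        = |n * w * deriv smoothStep (n * w)| * |1 - 2 * x| := by rw [← abs_mul]; ring_nf
      _ ≤ M * 1 := by gcongr
      _ ≤ _ := by linarith
  · calc |w ^ 2 * (deriv (deriv smoothStep) (n * w) * (n * (1 - 2 * x)) ^ 2 -
          deriv smoothStep (n * w) * (2 * n))|
        = |(n * w) ^ 2 * deriv (deriv smoothStep) (n * w) * (1 - 2 * x) ^ 2 -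
            n * w * deriv smoothStep (n * w) * (2 * w)| := by ring_nf
      _ ≤ M * 1 ^ 2 + M * (2 * 1) := by
          refine (abs_sub _ _).trans ?_
          rw [abs_mul, abs_pow, abs_mul _ (2 * w), abs_of_pos (mul_pos two_pos hw0)]
          gcongr
      _ ≤ _ := by linarith

lemma adm1_mul_cutoff {y : ℝ → ℝ} (hy : ContDiff ℝ ∞ y) (n : ℕ) :
    Adm1 fun x => y x * cutoff n x := by
  have hsub : (Function.support fun x => y x * cutoff n x) ⊆ {x | 1 ≤ n * (x * (1 - x))} := by
    intro x hx
    refine le_of_not_gt (α := ℝ) fun hlt => hx ?_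
    simp [cutoff, smoothStep_of_le_one (le_of_lt hlt)]
  have hts : (tsupport fun x => y x * cutoff n x) ⊆ Ioo 0 1 := by
    refine (closure_minimal hsub (isClosed_le continuous_const (by fun_prop))).trans fun x hx => ?_
    have hw : 0 < x * (1 - x) :=
      pos_of_mul_pos_right (one_pos.trans_le hx) n.cast_nonneg
    constructor <;> nlinarith
  exact ⟨hy.mul (contDiff_cutoff n), HasCompactSupport.of_support_subset_isCompact
    isCompact_Icc ((subset_tsupport _).trans (hts.trans Ioo_subset_Icc_self)), hts⟩

/-- Smooth functions satisfying the clamped boundary conditions of `(0,1)`; they stand in for the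
form domain `H²₀(0,1)`. -/
structure IsClamped (y : ℝ → ℝ) : Prop where
  contDiff : ContDiff ℝ ∞ y
  left : y 0 = 0
  right : y 1 = 0
  deriv_left : deriv y 0 = 0
  deriv_right : deriv y 1 = 0

namespace IsClamped

variable {y : ℝ → ℝ}

lemma contDiff_deriv (h : IsClamped y) : ContDiff ℝ ∞ (deriv y) :=
  (contDiff_infty_iff_deriv.1 h.contDiff).2

lemma contDiff_deriv_deriv (h : IsClamped y) : ContDiff ℝ ∞ (deriv (deriv y)) :=
  (contDiff_infty_iff_deriv.1 h.contDiff_deriv).2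

lemma contDiff_two (h : IsClamped y) : ContDiff ℝ 2 y :=
  contDiff_infty.1 h.contDiff 2

lemma exists_abs_le (h : IsClamped y) : ∃ C, 0 ≤ C ∧ ∀ x ∈ Ioo (0 : ℝ) 1,
    |y x| ≤ C * (x * (1 - x)) ^ 2 ∧ |deriv y x| ≤ C * (x * (1 - x)) ∧ |deriv (deriv y) x| ≤ C := by
  obtain ⟨B, hB⟩ := (isCompact_Icc (a := (0 : ℝ)) (b := 1)).exists_bound_of_continuousOn
    h.contDiff_deriv_deriv.continuous.continuousOn
  have hB0 : 0 ≤ B := (norm_nonneg _).trans (hB 0 (by simp))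
  have hd : Differentiable ℝ y := h.contDiff.differentiable (by simp)
  have hd' : Differentiable ℝ (deriv y) := h.contDiff_deriv.differentiable (by simp)
  have hsub : ∀ {a x : ℝ}, a ∈ Icc (0 : ℝ) 1 → x ∈ Icc (0 : ℝ) 1 → uIcc a x ⊆ Icc 0 1 :=
    fun ha hx => ordConnected_Icc.uIcc_subset ha hx
  have bound_deriv : ∀ {a x : ℝ}, a ∈ Icc (0 : ℝ) 1 → deriv y a = 0 → x ∈ Icc (0 : ℝ) 1 →
      |deriv y x| ≤ B * |x - a| := fun ha hya hx => by
    simpa using abs_le_mul_pow_succ_of_abs_deriv_le hd' hya hB0 (k := 0)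
      fun z hz => by simpa using hB z (hsub ha hx hz)
  have bound : ∀ {a x : ℝ}, a ∈ Icc (0 : ℝ) 1 → y a = 0 → deriv y a = 0 → x ∈ Icc (0 : ℝ) 1 →
      |y x| ≤ B * |x - a| ^ 2 := fun ha hya hya' hx =>
    abs_le_mul_pow_succ_of_abs_deriv_le hd hya hB0 (k := 1)
      fun z hz => by simpa using bound_deriv ha hya' (hsub ha hx hz)
  refine ⟨4 * B, by positivity, fun x hx => ?_⟩
  have hI := Ioo_subset_Icc_self hx
  have hx0 : 0 ≤ x := hI.1
  have hx1 : 0 ≤ 1 - x := sub_nonneg.2 hI.2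
  have l₀ := bound (left_mem_Icc.2 zero_le_one) h.left h.deriv_left hI
  have r₀ := bound (right_mem_Icc.2 zero_le_one) h.right h.deriv_right hI
  have l₁ := bound_deriv (left_mem_Icc.2 zero_le_one) h.deriv_left hI
  have r₁ := bound_deriv (right_mem_Icc.2 zero_le_one) h.deriv_right hI
  rw [sub_zero, abs_of_nonneg hx0] at l₀ l₁
  rw [abs_sub_comm, abs_of_nonneg hx1] at r₀ r₁
  refine ⟨?_, ?_, (hB x hI).trans (by linarith)⟩
  · calc |y x| ≤ 2 * ((1 - x) ^ 2 * |y x|) + 2 * (x ^ 2 * |y x|) := by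
          nlinarith [mul_nonneg (sq_nonneg (1 - 2 * x)) (abs_nonneg (y x))]
      _ ≤ 2 * ((1 - x) ^ 2 * (B * x ^ 2)) + 2 * (x ^ 2 * (B * (1 - x) ^ 2)) := by gcongr
      _ = 4 * B * (x * (1 - x)) ^ 2 := by ring
  · calc |deriv y x| = (1 - x) * |deriv y x| + x * |deriv y x| := by ring
      _ ≤ (1 - x) * (B * x) + x * (B * (1 - x)) := by gcongr
      _ = 2 * B * (x * (1 - x)) := by ring
      _ ≤ 4 * B * (x * (1 - x)) := by gcongr; norm_num

/-- The decay `y = O(w²)`, `y' = O(w)` with `w = x (1 - x)` absorbs the growth `w⁻¹`, `w⁻²` of the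
derivatives of the cutoffs. -/
lemma exists_abs_mul_cutoff_le (h : IsClamped y) : ∃ B, ∀ (n : ℕ), ∀ x ∈ Ioo (0 : ℝ) 1,
    |y x * cutoff n x| ≤ B ∧ |deriv (fun x => y x * cutoff n x) x| ≤ B ∧
      |deriv (deriv fun x => y x * cutoff n x) x| ≤ B := by
  obtain ⟨C, hC0, hC⟩ := h.exists_abs_le
  obtain ⟨M, hM⟩ := exists_abs_weight_mul_deriv_cutoff_le
  refine ⟨4 * (C * M), fun n x hx => ?_⟩
  obtain ⟨y₀, y₁, y₂⟩ := hC x hx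
  obtain ⟨χ₀, χ₁, χ₂⟩ := hM n x hx
  have hχ : ContDiff ℝ 2 (cutoff n) := contDiff_infty.1 (contDiff_cutoff n) 2
  rw [deriv_deriv_mul_eq h.contDiff_two hχ, deriv_mul_eq (h.contDiff_two.differentiable two_ne_zero)
    (hχ.differentiable two_ne_zero)]
  set w : ℝ := x * (1 - x)
  have hw0 : 0 ≤ w := mul_nonneg hx.1.le (sub_nonneg.2 hx.2.le)
  have hw1 : w ≤ 1 := by nlinarith [hx.1, hx.2]
  have hM0 : 0 ≤ M := (abs_nonneg _).trans χ₀
  have y₁_le : |deriv y x| ≤ C := y₁.trans (mul_le_of_le_one_right hC0 hw1)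
  have y₀_le_w : |y x| ≤ C * w := y₀.trans (by gcongr; exact pow_le_of_le_one hw0 hw1 two_ne_zero)
  have y₀_le : |y x| ≤ C := y₀_le_w.trans (mul_le_of_le_one_right hC0 hw1)
  have h₀₀ : |y x * cutoff n x| ≤ C * M :=
    abs_mul_le_of_abs_le_mul hC0 zero_le_one (by simpa using y₀_le) (by simpa using χ₀)
  have h₁₀ : |deriv y x * cutoff n x| ≤ C * M :=
    abs_mul_le_of_abs_le_mul hC0 zero_le_one (by simpa using y₁_le) (by simpa using χ₀)
  have h₂₀ : |deriv (deriv y) x * cutoff n x| ≤ C * M :=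
    abs_mul_le_of_abs_le_mul hC0 zero_le_one (by simpa using y₂) (by simpa using χ₀)
  have h₀₁ : |y x * deriv (cutoff n) x| ≤ C * M := abs_mul_le_of_abs_le_mul hC0 hw0 y₀_le_w χ₁
  have h₁₁ : |2 * (deriv y x * deriv (cutoff n) x)| ≤ 2 * (C * M) := by
    rw [abs_mul, abs_two]
    exact mul_le_mul_of_nonneg_left (abs_mul_le_of_abs_le_mul hC0 hw0 y₁ χ₁) zero_le_two
  have h₀₂ : |y x * deriv (deriv (cutoff n)) x| ≤ C * M :=
    abs_mul_le_of_abs_le_mul hC0 (sq_nonneg w) y₀ χ₂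
  have hCM : 0 ≤ C * M := by positivity
  refine ⟨h₀₀.trans (by linarith), (abs_add_le _ _).trans (by linarith),
    (abs_add_three _ _ _).trans (by linarith)⟩

theorem exists_adm1_tendsto (h : IsClamped y) : ∃ v : ℕ → ℝ → ℝ, (∀ n, Adm1 (v n)) ∧
    Tendsto (fun n => ∫ x in (0 : ℝ)..1, v n x ^ 2) atTop (𝓝 (∫ x in (0 : ℝ)..1, y x ^ 2)) ∧
    Tendsto (fun n => ∫ x in (0 : ℝ)..1, deriv (v n) x ^ 2) atTop
      (𝓝 (∫ x in (0 : ℝ)..1, deriv y x ^ 2)) ∧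
    Tendsto (fun n => ∫ x in (0 : ℝ)..1, deriv (deriv (v n)) x ^ 2) atTop
      (𝓝 (∫ x in (0 : ℝ)..1, deriv (deriv y) x ^ 2)) := by
  set v : ℕ → ℝ → ℝ := fun n x => y x * cutoff n x
  obtain ⟨B, hB⟩ := h.exists_abs_mul_cutoff_le
  have hv : ∀ n, ContDiff ℝ ∞ (v n) := fun n => h.contDiff.mul (contDiff_cutoff n)
  have hv' : ∀ n, ContDiff ℝ ∞ (deriv (v n)) := fun n => (contDiff_infty_iff_deriv.1 (hv n)).2
  have hv'' : ∀ n, ContDiff ℝ ∞ (deriv (deriv (v n))) :=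
    fun n => (contDiff_infty_iff_deriv.1 (hv' n)).2
  have hlim : ∀ x ∈ Ioo (0 : ℝ) 1, ∀ᶠ n in atTop, v n =ᶠ[𝓝 x] y := fun x hx => by
    filter_upwards [eventually_cutoff_eventuallyEq_one hx] with n hn
    filter_upwards [hn] with z hz
    simp [v, hz]
  refine ⟨v, adm1_mul_cutoff h.contDiff, ?_, ?_, ?_⟩
  · exact tendsto_integral_sq_of_eventually_eq zero_le_one (fun n => (hv n).continuous)
      (fun n x hx => (hB n x hx).1) fun x hx => (hlim x hx).mono fun n hn => hn.eq_of_nhds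
  · exact tendsto_integral_sq_of_eventually_eq zero_le_one (fun n => (hv' n).continuous)
      (fun n x hx => (hB n x hx).2.1) fun x hx => (hlim x hx).mono fun n hn => hn.deriv_eq
  · exact tendsto_integral_sq_of_eventually_eq zero_le_one (fun n => (hv'' n).continuous)
      (fun n x hx => (hB n x hx).2.2) fun x hx => (hlim x hx).mono fun n hn => hn.deriv.deriv_eq

end IsClamped

end Approximation

section Rayleigh

/-- The quadratic form of `y'''' - c y''` on `(0,1)`; `rho α` minimises it for `c = 2 α`. -/
def beamEnergy (c : ℝ) (v : ℝ → ℝ) : ℝ :=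
  (∫ x in (0 : ℝ)..1, deriv (deriv v) x ^ 2) + c * ∫ x in (0 : ℝ)..1, deriv v x ^ 2

/-- The values of the quadratic form on normalised test functions; `rho α` is their infimum. -/
def rayleighSet (α : ℝ) : Set ℝ :=
  {r | ∃ v, Adm1 v ∧ ∫ x in (0 : ℝ)..1, v x ^ 2 = 1 ∧ r = beamEnergy (2 * α) v}

lemma rho_eq_sInf_rayleighSet (α : ℝ) : rho α = sInf (rayleighSet α) := rfl

lemma Adm1.const_mul {v : ℝ → ℝ} (hv : Adm1 v) (k : ℝ) : Adm1 fun x => k * v x :=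
  ⟨contDiff_const.mul hv.1, hv.2.1.mul_left (f := fun _ => k),
    (closure_mono (Function.support_mul_subset_right (fun _ => k) v)).trans hv.2.2⟩

lemma beamEnergy_const_mul (c k : ℝ) (v : ℝ → ℝ) :
    beamEnergy c (fun x => k * v x) = k ^ 2 * beamEnergy c v := by
  simp only [beamEnergy, deriv_const_mul_field', mul_pow, intervalIntegral.integral_const_mul]
  ring

lemma Adm1.div_mem_rayleighSet {v : ℝ → ℝ} (hv : Adm1 v) {α : ℝ}
    (hpos : 0 < ∫ x in (0 : ℝ)..1, v x ^ 2) :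
    beamEnergy (2 * α) v / (∫ x in (0 : ℝ)..1, v x ^ 2) ∈ rayleighSet α := by
  refine ⟨_, hv.const_mul (√(∫ x in (0 : ℝ)..1, v x ^ 2))⁻¹, ?_, ?_⟩
  · simp only [mul_pow, intervalIntegral.integral_const_mul]
    rw [inv_pow, sq_sqrt hpos.le, inv_mul_cancel₀ hpos.ne']
  · rw [beamEnergy_const_mul, inv_pow, sq_sqrt hpos.le, div_eq_inv_mul]

lemma IsClamped.div_mem_closure_rayleighSet {y : ℝ → ℝ} (h : IsClamped y) {α : ℝ}
    (hpos : 0 < ∫ x in (0 : ℝ)..1, y x ^ 2) :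
    beamEnergy (2 * α) y / (∫ x in (0 : ℝ)..1, y x ^ 2) ∈ closure (rayleighSet α) := by
  obtain ⟨v, hv, t₀, t₁, t₂⟩ := h.exists_adm1_tendsto
  refine mem_closure_of_tendsto ((t₂.add (t₁.const_mul (2 * α))).div t₀ hpos.ne') ?_
  filter_upwards [t₀.eventually_const_lt hpos] with n hn using (hv n).div_mem_rayleighSet hn

lemma Adm1.exists_eq_mul {v y : ℝ → ℝ} (hv : Adm1 v) (hy : ContDiff ℝ ∞ y)
    (hne : ∀ x ∈ Ioo (0 : ℝ) 1, y x ≠ 0) : ∃ u, ContDiff ℝ ∞ u ∧ v = fun x => y x * u x := by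
  refine ⟨fun x => v x / y x, contDiff_iff_contDiffAt.2 fun x => ?_, funext fun x => ?_⟩
  · by_cases hx : x ∈ tsupport v
    · exact hv.1.contDiffAt.div hy.contDiffAt (hne x (hv.2.2 hx))
    · refine (contDiffAt_const (c := (0 : ℝ))).congr_of_eventuallyEq ?_
      filter_upwards [notMem_tsupport_iff_eventuallyEq.1 hx] with z hz
      simp [hz]
  · by_cases hx : x ∈ tsupport v
    · rw [mul_div_cancel₀ _ (hne x (hv.2.2 hx))]
    · simp [image_eq_zero_of_notMem_tsupport hx]

/-- Smooth solutions of the eigenvalue problem `y'''' - c y'' = μ y` with clamped ends. -/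
structure IsClampedEigenfunction (c μ : ℝ) (y : ℝ → ℝ) : Prop extends IsClamped y where
  deriv_four : ∀ x, deriv (deriv (deriv (deriv y))) x = c * deriv (deriv y) x + μ * y x

/-- The coefficient of `u'²` in the quadratic form of `y'''' - c y''` at `y u`, once the eigenvalue
equation of `y` has been used; see `IsClampedEigenfunction.beamEnergy_mul`. -/
def piconePotential (c : ℝ) (y : ℝ → ℝ) (x : ℝ) : ℝ :=
  2 * deriv y x ^ 2 - 4 * y x * deriv (deriv y) x + c * y x ^ 2

namespace IsClampedEigenfunction

variable {c μ : ℝ} {y u v : ℝ → ℝ}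

lemma contDiff_deriv_three (h : IsClampedEigenfunction c μ y) :
    ContDiff ℝ ∞ (deriv (deriv (deriv y))) :=
  (contDiff_infty_iff_deriv.1 h.contDiff_deriv_deriv).2

lemma hasDerivAt_piconeFlux (h : IsClampedEigenfunction c μ y) (hu : ContDiff ℝ 2 u) (x : ℝ) :
    HasDerivAt (fun x => 2 * (y x * deriv y x) * deriv u x ^ 2 +
        2 * (y x * deriv (deriv y) x) * (u x * deriv u x) +
        (deriv y x * deriv (deriv y) x - y x * deriv (deriv (deriv y)) x +
          c * (y x * deriv y x)) * u x ^ 2)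
      ((deriv (deriv y) x * u x + 2 * (deriv y x * deriv u x) + y x * deriv (deriv u) x) ^ 2 +
        c * (deriv y x * u x + y x * deriv u x) ^ 2 - (μ * (y x * u x) ^ 2 +
          ((y x * deriv (deriv u) x) ^ 2 + piconePotential c y x * deriv u x ^ 2))) x := by
  have y₀ := (h.contDiff.differentiable (by simp) x).hasDerivAt
  have y₁ := (h.contDiff_deriv.differentiable (by simp) x).hasDerivAt
  have y₂ := (h.contDiff_deriv_deriv.differentiable (by simp) x).hasDerivAt
  have y₃ := (h.contDiff_deriv_three.differentiable (by simp) x).hasDerivAt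
  rw [h.deriv_four] at y₃
  have u₀ := (hu.differentiable two_ne_zero x).hasDerivAt
  have u₁ := (hu.differentiable_deriv_two x).hasDerivAt
  refine (((((y₀.fun_mul y₁).const_mul 2).fun_mul (u₁.fun_pow 2)).fun_add
    (((y₀.fun_mul y₂).const_mul 2).fun_mul (u₀.fun_mul u₁))).fun_add
    ((((y₁.fun_mul y₂).fun_sub (y₀.fun_mul y₃)).fun_add ((y₀.fun_mul y₁).const_mul c)).fun_mul
      (u₀.fun_pow 2))).congr_deriv ?_
  rw [piconePotential]
  push_cast
  ring

/-- Picone's identity: the flux above vanishes at both ends of `(0,1)` because `y` is clamped. -/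
lemma beamEnergy_mul (h : IsClampedEigenfunction c μ y) (hu : ContDiff ℝ 2 u) :
    beamEnergy c (fun x => y x * u x) = μ * (∫ x in (0 : ℝ)..1, (y x * u x) ^ 2) +
      ∫ x in (0 : ℝ)..1,
        ((y x * deriv (deriv u) x) ^ 2 + piconePotential c y x * deriv u x ^ 2) := by
  have cy := h.contDiff.continuous
  have cy' := h.contDiff_deriv.continuous
  have cy'' := h.contDiff_deriv_deriv.continuous
  have cu := hu.continuous
  have cu' := hu.continuous_deriv one_le_two
  have : Continuous (deriv (deriv u)) := by
    simpa [iteratedDeriv_succ] using hu.continuous_iteratedDeriv 2 le_rfl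
  have ii : ∀ {f : ℝ → ℝ}, Continuous f → IntervalIntegrable f volume 0 1 :=
    fun hf => hf.intervalIntegrable _ _
  have cV : Continuous (piconePotential c y) := by unfold piconePotential; fun_prop
  have hflux := intervalIntegral.integral_eq_sub_of_hasDerivAt (a := 0) (b := 1)
    (fun x _ => h.hasDerivAt_piconeFlux hu x) (ii (by fun_prop))
  rw [intervalIntegral.integral_sub (ii (by fun_prop)) (ii (by fun_prop)),
    intervalIntegral.integral_add (ii (by fun_prop)) (ii (by fun_prop)),
    intervalIntegral.integral_add (ii (by fun_prop)) (ii (by fun_prop)),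
    intervalIntegral.integral_const_mul, intervalIntegral.integral_const_mul] at hflux
  simp only [h.left, h.right, h.deriv_left, h.deriv_right] at hflux
  rw [beamEnergy, deriv_deriv_mul_eq h.contDiff_two hu,
    deriv_mul_eq (h.contDiff_two.differentiable two_ne_zero) (hu.differentiable two_ne_zero)]
  linarith

lemma beamEnergy_eq (h : IsClampedEigenfunction c μ y) :
    beamEnergy c y = μ * ∫ x in (0 : ℝ)..1, y x ^ 2 := by
  simpa using h.beamEnergy_mul (contDiff_const (c := (1 : ℝ)))

lemma le_beamEnergy (h : IsClampedEigenfunction c μ y) (hy : ∀ x ∈ Ioo (0 : ℝ) 1, 0 < y x)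
    (hV : ∀ x ∈ Icc (0 : ℝ) 1, 0 ≤ piconePotential c y x) (hv : Adm1 v) :
    μ * (∫ x in (0 : ℝ)..1, v x ^ 2) ≤ beamEnergy c v := by
  obtain ⟨u, hu, rfl⟩ := hv.exists_eq_mul h.contDiff fun x hx => (hy x hx).ne'
  rw [h.beamEnergy_mul (contDiff_infty.1 hu 2)]
  refine le_add_of_nonneg_right (intervalIntegral.integral_nonneg zero_le_one fun x hx => ?_)
  have := hV x hx
  positivity

theorem rho_eq {α : ℝ} (h : IsClampedEigenfunction (2 * α) μ y)
    (hy : ∀ x ∈ Ioo (0 : ℝ) 1, 0 < y x)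
    (hV : ∀ x ∈ Icc (0 : ℝ) 1, 0 ≤ piconePotential (2 * α) y x) : rho α = μ := by
  have hpos : 0 < ∫ x in (0 : ℝ)..1, y x ^ 2 :=
    intervalIntegral.intervalIntegral_pos_of_pos_on
      ((h.contDiff.continuous.pow 2).intervalIntegrable _ _) (fun x hx => pow_pos (hy x hx) 2)
      one_pos
  have hmem := h.div_mem_closure_rayleighSet (α := α) hpos
  rw [h.beamEnergy_eq, mul_div_cancel_right₀ _ hpos.ne'] at hmem
  rw [rho_eq_sInf_rayleighSet]
  refine (isGLB_of_mem_closure ?_ hmem).csInf_eq (closure_nonempty_iff.1 ⟨μ, hmem⟩)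
  rintro _ ⟨v, hv, hnorm, rfl⟩
  simpa [hnorm] using h.le_beamEnergy hy hV hv

end IsClampedEigenfunction

end Rayleigh

section Mode

lemma deriv_cosh_add_cos (a b p q : ℝ) : (deriv fun z => a * cosh (q * z) + b * cos (p * z)) =
    fun z => a * q * sinh (q * z) + -(b * p) * sin (p * z) :=
  funext fun z => (((((hasDerivAt_id' z).const_mul q).cosh.const_mul a).fun_add
    (((hasDerivAt_id' z).const_mul p).cos.const_mul b)).congr_deriv (by ring)).deriv

lemma deriv_sinh_add_sin (a b p q : ℝ) : (deriv fun z => a * sinh (q * z) + b * sin (p * z)) =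
    fun z => a * q * cosh (q * z) + b * p * cos (p * z) :=
  funext fun z => (((((hasDerivAt_id' z).const_mul q).sinh.const_mul a).fun_add
    (((hasDerivAt_id' z).const_mul p).sin.const_mul b)).congr_deriv (by ring)).deriv

lemma deriv_rescale {f : ℝ → ℝ} (hf : Differentiable ℝ f) (k : ℝ) :
    (deriv fun x => k * f (2 * x - 1)) = fun x => 2 * k * deriv f (2 * x - 1) := by
  ext x
  have hlin : HasDerivAt (fun x : ℝ => 2 * x - 1) 2 x := by
    simpa using ((hasDerivAt_id' x).const_mul 2).sub_const 1
  exact (((HasDerivAt.comp x (hf _).hasDerivAt hlin).const_mul k).congr_deriv (by ring)).deriv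

lemma hasDerivAt_piconePotential {y : ℝ → ℝ} (hy : ContDiff ℝ 3 y) (c x : ℝ) :
    HasDerivAt (piconePotential c y)
      (-2 * y x * (2 * deriv (deriv (deriv y)) x - c * deriv y x)) x := by
  have hy' : ContDiff ℝ 2 (deriv y) := hy.iterate_deriv' 2 1
  have y₀ := (hy.differentiable three_ne_zero x).hasDerivAt
  have y₁ := (hy'.differentiable two_ne_zero x).hasDerivAt
  have y₂ := (hy'.differentiable_deriv_two x).hasDerivAt
  refine ((((y₁.fun_pow 2).const_mul 2).fun_sub ((y₀.const_mul 4).fun_mul y₂)).fun_add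
    ((y₀.fun_pow 2).const_mul c)).congr_deriv ?_
  push_cast
  ring

lemma strictConvexOn_sinh_Ici : StrictConvexOn ℝ (Ici 0) sinh := by
  refine strictConvexOn_of_deriv2_pos (convex_Ici 0) continuous_sinh.continuousOn fun x hx => ?_
  rw [interior_Ici] at hx
  simpa using hx

lemma sinh_mul_lt {q z : ℝ} (hq : 0 < q) (hz : z ∈ Ioo (0 : ℝ) 1) :
    sinh (q * z) < z * sinh q := by
  have := strictConvexOn_sinh_Ici.2 self_mem_Ici hq.le hq.ne (sub_pos.2 hz.2) hz.1
    (sub_add_cancel 1 z)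
  simpa [mul_comm] using this

lemma lt_sin_mul_of_mem_Ioo {p z : ℝ} (hp : p ∈ Ioo 0 π) (hz : z ∈ Ioo (0 : ℝ) 1) :
    z * sin p < sin (p * z) := by
  have := strictConcaveOn_sin_Icc.2 (left_mem_Icc.2 pi_pos.le) (Ioo_subset_Icc_self hp) hp.1.ne
    (sub_pos.2 hz.2) hz.1 (sub_add_cancel 1 z)
  simpa [mul_comm] using this

lemma cos_neg_of_mem_Ioo {p : ℝ} (hp : p ∈ Ioo (π / 2) π) : cos p < 0 :=
  cos_neg_of_pi_div_two_lt_of_lt hp.1 (by linarith [hp.2, pi_pos])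

lemma three_halves_lt_of_mem_Ioo {p : ℝ} (hp : p ∈ Ioo (π / 2) π) : 3 / 2 < p := by
  linarith [hp.1, pi_gt_three]

/-- The even function vanishing at `±1` that solves `y'''' - (q² - p²) y'' = p² q² y`. Its
derivative vanishes at `±1` as well when `q tanh q = -p tan p`, and it is then the first clamped
mode of `(-1,1)`. -/
def mode (p q z : ℝ) : ℝ := -cos p * cosh (q * z) + cosh q * cos (p * z)

variable {p q : ℝ}

lemma contDiff_mode : ContDiff ℝ ∞ (mode p q) := by
  unfold mode
  fun_prop

lemma deriv_mode : deriv (mode p q) =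
    fun z => -cos p * q * sinh (q * z) + -(cosh q * p) * sin (p * z) :=
  deriv_cosh_add_cos _ _ _ _

lemma deriv_deriv_mode : deriv (deriv (mode p q)) =
    fun z => -cos p * q * q * cosh (q * z) + -(cosh q * p) * p * cos (p * z) := by
  rw [deriv_mode, deriv_sinh_add_sin]

lemma deriv_three_mode : deriv (deriv (deriv (mode p q))) =
    fun z => -cos p * q * q * q * sinh (q * z) + -(-(cosh q * p) * p * p) * sin (p * z) := by
  rw [deriv_deriv_mode, deriv_cosh_add_cos]

lemma deriv_four_mode (z : ℝ) : deriv (deriv (deriv (deriv (mode p q)))) z =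
    (q ^ 2 - p ^ 2) * deriv (deriv (mode p q)) z + p ^ 2 * q ^ 2 * mode p q z := by
  rw [deriv_three_mode, deriv_sinh_add_sin, deriv_deriv_mode, mode]
  ring

lemma mode_neg (z : ℝ) : mode p q (-z) = mode p q z := by
  simp [mode]

lemma mode_one : mode p q 1 = 0 := by
  simp only [mode, mul_one]
  ring

lemma deriv_mode_neg (z : ℝ) : deriv (mode p q) (-z) = -deriv (mode p q) z := by
  simp only [deriv_mode, mul_neg, sinh_neg, sin_neg]
  ring

lemma mul_sinh_mul_cos_eq (hp : p ∈ Ioo (π / 2) π) (hpq : q * tanh q = -(p * tan p)) :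
    q * sinh q * cos p = -(p * sin p * cosh q) := by
  have hcos := (cos_neg_of_mem_Ioo hp).ne
  have hcosh := (cosh_pos q).ne'
  rw [tanh_eq_sinh_div_cosh, tan_eq_sin_div_cos] at hpq
  field_simp at hpq
  linarith

lemma deriv_mode_one (hp : p ∈ Ioo (π / 2) π) (hpq : q * tanh q = -(p * tan p)) :
    deriv (mode p q) 1 = 0 := by
  simp only [deriv_mode, mul_one]
  linear_combination -mul_sinh_mul_cos_eq hp hpq

lemma deriv_mode_neg_of_mem_Ioo (hp : p ∈ Ioo (π / 2) π) (hq : 0 < q)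
    (hpq : q * tanh q = -(p * tan p)) {z : ℝ} (hz : z ∈ Ioo (0 : ℝ) 1) :
    deriv (mode p q) z < 0 := by
  have hp0 : 0 < p := pi_div_two_pos.trans hp.1
  have hcos : 0 < -cos p := neg_pos.2 (cos_neg_of_mem_Ioo hp)
  have := cosh_pos q
  calc deriv (mode p q) z = -cos p * q * sinh (q * z) - cosh q * p * sin (p * z) := by
        rw [deriv_mode]; ring
    _ < -cos p * q * (z * sinh q) - cosh q * p * (z * sin p) := by
        gcongr
        · exact sinh_mul_lt hq hz
        · exact lt_sin_mul_of_mem_Ioo ⟨hp0, hp.2⟩ hz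
    _ = 0 := by linear_combination -z * mul_sinh_mul_cos_eq hp hpq

lemma mode_pos (hp : p ∈ Ioo (π / 2) π) (hq : 0 < q) (hpq : q * tanh q = -(p * tan p)) {z : ℝ}
    (hz : |z| < 1) : 0 < mode p q z := by
  have hanti : StrictAntiOn (mode p q) (Icc 0 1) := by
    refine strictAntiOn_of_deriv_neg (convex_Icc 0 1) contDiff_mode.continuous.continuousOn ?_
    rw [interior_Icc]
    exact fun z => deriv_mode_neg_of_mem_Ioo hp hq hpq
  have heven : mode p q |z| = mode p q z := by
    rcases abs_choice z with h | h <;> rw [h]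
    exact mode_neg z
  rw [← heven, ← mode_one (p := p) (q := q)]
  exact hanti ⟨abs_nonneg z, hz.le⟩ (by simp) hz

lemma antitoneOn_piconePotential_mode (hp : p ∈ Ioo (π / 2) π) (hq : 0 < q)
    (hpq : q * tanh q = -(p * tan p)) :
    AntitoneOn (piconePotential (q ^ 2 - p ^ 2) (mode p q)) (Icc 0 1) := by
  have hp0 : 0 < p := pi_div_two_pos.trans hp.1
  have hd := hasDerivAt_piconePotential (contDiff_infty.1 (contDiff_mode (p := p) (q := q)) 3)
    (q ^ 2 - p ^ 2)
  refine antitoneOn_of_deriv_nonpos (convex_Icc 0 1)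
    (fun z _ => (hd z).continuousAt.continuousWithinAt)
    (fun z _ => (hd z).differentiableAt.differentiableWithinAt) fun z hz => ?_
  rw [interior_Icc] at hz
  have hfactor : 2 * deriv (deriv (deriv (mode p q))) z - (q ^ 2 - p ^ 2) * deriv (mode p q) z =
      (p ^ 2 + q ^ 2) * (-cos p * (q * sinh (q * z)) + cosh q * (p * sin (p * z))) := by
    rw [deriv_three_mode, deriv_mode]
    ring
  have hsinh : 0 ≤ sinh (q * z) := sinh_nonneg_iff.2 (mul_pos hq hz.1).le
  have hsin : 0 ≤ sin (p * z) := sin_nonneg_of_nonneg_of_le_pi (mul_pos hp0 hz.1).le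
    ((mul_le_of_le_one_right hp0.le hz.2.le).trans hp.2.le)
  have hcos : 0 ≤ -cos p := (neg_pos.2 (cos_neg_of_mem_Ioo hp)).le
  have := cosh_pos q
  have hmode := mode_pos hp hq hpq (abs_lt.2 ⟨neg_one_lt_zero.trans hz.1, hz.2⟩)
  rw [(hd z).deriv, hfactor, neg_mul, neg_mul]
  exact neg_nonpos.2 (by positivity)

lemma piconePotential_mode_nonneg (hp : p ∈ Ioo (π / 2) π) (hq : 0 < q)
    (hpq : q * tanh q = -(p * tan p)) {z : ℝ} (hz : |z| ≤ 1) :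
    0 ≤ piconePotential (q ^ 2 - p ^ 2) (mode p q) z := by
  have heven : piconePotential (q ^ 2 - p ^ 2) (mode p q) |z| =
      piconePotential (q ^ 2 - p ^ 2) (mode p q) z := by
    rcases abs_choice z with h | h <;> rw [h]
    simp [piconePotential, mode_neg, deriv_mode_neg, deriv_deriv_mode]
  have hone : piconePotential (q ^ 2 - p ^ 2) (mode p q) 1 = 0 := by
    simp [piconePotential, mode_one, deriv_mode_one hp hpq]
  rw [← heven, ← hone]
  exact antitoneOn_piconePotential_mode hp hq hpq ⟨abs_nonneg z, hz⟩ (by simp) hz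

/-- The mode of `(-1,1)` transported to `(0,1)`. -/
def unitMode (p q x : ℝ) : ℝ := mode p q (2 * x - 1)

lemma deriv_unitMode : deriv (unitMode p q) = fun x => 2 * deriv (mode p q) (2 * x - 1) := by
  have h := deriv_rescale ((contDiff_mode (p := p) (q := q)).differentiable (by simp)) 1
  simp only [one_mul, mul_one] at h
  exact h

lemma deriv_deriv_unitMode :
    deriv (deriv (unitMode p q)) = fun x => 4 * deriv (deriv (mode p q)) (2 * x - 1) := by
  rw [deriv_unitMode, deriv_rescale]
  · norm_num
  · exact (contDiff_infty_iff_deriv.1 contDiff_mode).2.differentiable (by simp)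

lemma deriv_four_unitMode (x : ℝ) : deriv (deriv (deriv (deriv (unitMode p q)))) x =
    4 * (q ^ 2 - p ^ 2) * deriv (deriv (unitMode p q)) x +
      16 * p ^ 2 * q ^ 2 * unitMode p q x := by
  have h₂ : Differentiable ℝ (deriv (deriv (mode p q))) := by
    rw [deriv_deriv_mode]
    fun_prop
  have h₃ : Differentiable ℝ (deriv (deriv (deriv (mode p q)))) := by
    rw [deriv_three_mode]
    fun_prop
  rw [deriv_deriv_unitMode, deriv_rescale h₂, deriv_rescale h₃]
  simp only [deriv_four_mode, unitMode]
  ring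

lemma piconePotential_unitMode (c x : ℝ) : piconePotential (4 * c) (unitMode p q) x =
    4 * piconePotential c (mode p q) (2 * x - 1) := by
  rw [piconePotential, deriv_deriv_unitMode, deriv_unitMode, unitMode, piconePotential]
  ring

lemma isClampedEigenfunction_unitMode (hp : p ∈ Ioo (π / 2) π)
    (hpq : q * tanh q = -(p * tan p)) :
    IsClampedEigenfunction (4 * (q ^ 2 - p ^ 2)) (16 * p ^ 2 * q ^ 2) (unitMode p q) where
  contDiff := contDiff_mode.comp (by fun_prop)
  left := by norm_num [unitMode, mode_neg, mode_one]
  right := by norm_num [unitMode, mode_one]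
  deriv_left := by norm_num [deriv_unitMode, deriv_mode_neg, deriv_mode_one hp hpq]
  deriv_right := by norm_num [deriv_unitMode, deriv_mode_one hp hpq]
  deriv_four := deriv_four_unitMode

theorem rho_eq_of_mul_tanh_eq (hp : p ∈ Ioo (π / 2) π) (hq : 0 < q)
    (hpq : q * tanh q = -(p * tan p)) : rho (2 * (q ^ 2 - p ^ 2)) = 16 * p ^ 2 * q ^ 2 := by
  have hmode := isClampedEigenfunction_unitMode hp hpq
  have hc : 4 * (q ^ 2 - p ^ 2) = 2 * (2 * (q ^ 2 - p ^ 2)) := by ring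
  rw [hc] at hmode
  refine hmode.rho_eq (fun x hx => ?_) fun x hx => ?_
  · exact mode_pos hp hq hpq (abs_lt.2 ⟨by linarith [hx.1], by linarith [hx.2]⟩)
  · rw [← hc, piconePotential_unitMode]
    exact mul_nonneg zero_le_four (piconePotential_mode_nonneg hp hq hpq
      (abs_le.2 ⟨by linarith [hx.1], by linarith [hx.2]⟩))

end Mode

section Frequencies

/-- The hyperbolic side `q tanh q` of the characteristic equation `q tanh q = -p tan p`. -/
def mulTanh (q : ℝ) : ℝ := q * tanh q

/-- The trigonometric side `-p tan p` of the characteristic equation `q tanh q = -p tan p`. -/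
def negMulTan (p : ℝ) : ℝ := -(p * tan p)

lemma hasStrictDerivAt_mulTanh {q : ℝ} (hq : q ≠ 0) :
    HasStrictDerivAt mulTanh ((q ^ 2 - (mulTanh q ^ 2 - mulTanh q)) / q) q := by
  have hcosh := (cosh_pos q).ne'
  have htanh := (hasStrictDerivAt_sinh q).fun_div (hasStrictDerivAt_cosh q) hcosh
  simp only [← tanh_eq_sinh_div_cosh] at htanh
  refine ((hasStrictDerivAt_id q).mul htanh).congr_deriv ?_
  simp only [mulTanh, id, tanh_eq_sinh_div_cosh]
  field_simp
  ring

lemma hasStrictDerivAt_negMulTan {p : ℝ} (hp : p ≠ 0) (hcos : cos p ≠ 0) :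
    HasStrictDerivAt negMulTan (-(p ^ 2 + (negMulTan p ^ 2 - negMulTan p)) / p) p := by
  refine ((hasStrictDerivAt_id p).mul (hasStrictDerivAt_tan hcos)).neg.congr_deriv ?_
  simp only [negMulTan, id, ← inv_one_add_tan_sq hcos]
  field_simp
  ring

lemma continuous_mulTanh : Continuous mulTanh := by
  unfold mulTanh
  simp only [tanh_eq_sinh_div_cosh]
  exact continuous_id.mul (continuous_sinh.div continuous_cosh fun x => (cosh_pos x).ne')

lemma mulTanh_sq_le (q : ℝ) : mulTanh q ^ 2 ≤ q ^ 2 := by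
  rw [mulTanh, mul_pow]
  exact mul_le_of_le_one_right (sq_nonneg q) (tanh_sq_lt_one q).le

lemma mulTanh_pos {q : ℝ} (hq : 0 < q) : 0 < mulTanh q := by
  rw [mulTanh, tanh_eq_sinh_div_cosh]
  exact mul_pos hq (div_pos (sinh_pos_iff.2 hq) (cosh_pos q))

lemma sub_one_le_mulTanh (q : ℝ) : q - 1 ≤ mulTanh q := by
  rw [mulTanh, tanh_eq_sinh_div_cosh, ← mul_div_assoc, le_div_iff₀ (cosh_pos q)]
  have hexp : q * exp (-q) ≤ 1 := by
    rw [exp_neg, ← div_eq_mul_inv, div_le_one (exp_pos q)]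
    linarith [add_one_le_exp q]
  rw [← cosh_sub_sinh] at hexp
  linarith [one_le_cosh q]

lemma one_lt_mulTanh {q : ℝ} (hq : 3 / 2 < q) : 1 < mulTanh q := by
  rw [mulTanh, tanh_eq_sinh_div_cosh, ← mul_div_assoc, one_lt_div (cosh_pos q)]
  have hsinh : q < sinh q := self_lt_sinh_iff.2 (by linarith)
  have hexp : exp (-q) ≤ (q + 1)⁻¹ := by
    rw [exp_neg]
    exact inv_anti₀ (by linarith) (add_one_le_exp q)
  have hinv : (q + 1)⁻¹ < 1 / 2 := by
    rw [inv_lt_comm₀ (by linarith) (by norm_num)]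
    linarith
  rw [← cosh_sub_sinh] at hexp
  nlinarith

lemma strictMonoOn_mulTanh : StrictMonoOn mulTanh (Ioi 0) := by
  refine strictMonoOn_of_deriv_pos (convex_Ioi 0) continuous_mulTanh.continuousOn fun q hq => ?_
  rw [interior_Ioi, mem_Ioi] at hq
  rw [(hasStrictDerivAt_mulTanh hq.ne').hasDerivAt.deriv]
  exact div_pos (by linarith [mulTanh_sq_le q, mulTanh_pos hq]) hq

/-- `t² - t`, the quantity through which `T = q tanh q = -p tan p` enters the derivatives of both
frequencies. -/
def defect (t : ℝ) : ℝ := t ^ 2 - t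

lemma neg_one_quarter_le_defect (t : ℝ) : -(1 / 4) ≤ defect t := by
  rw [defect]
  nlinarith [sq_nonneg (t - 1 / 2)]

lemma sq_add_defect_pos {p : ℝ} (hp : p ∈ Ioo (π / 2) π) (t : ℝ) : 0 < p ^ 2 + defect t := by
  nlinarith [three_halves_lt_of_mem_Ioo hp, neg_one_quarter_le_defect t]

lemma strictAntiOn_negMulTan : StrictAntiOn negMulTan (Ioo (π / 2) π) := by
  have hd : ∀ p ∈ Ioo (π / 2) π, HasStrictDerivAt negMulTan _ p := fun p hp =>
    hasStrictDerivAt_negMulTan (pi_div_two_pos.trans hp.1).ne' (cos_neg_of_mem_Ioo hp).ne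
  refine strictAntiOn_of_deriv_neg (convex_Ioo _ _)
    (fun p hp => (hd p hp).hasDerivAt.continuousAt.continuousWithinAt) fun p hp => ?_
  rw [interior_Ioo] at hp
  rw [(hd p hp).hasDerivAt.deriv, neg_div, neg_lt_zero]
  exact div_pos (sq_add_defect_pos hp _) (pi_div_two_pos.trans hp.1)

lemma exists_negMulTan_eq {g : ℝ → ℝ} (hg : Continuous g) (hπ : 0 < g π) :
    ∃ p ∈ Ioo (π / 2) π, negMulTan p = g p := by
  have hcont : Continuous fun p => g p * cos p + p * sin p := by fun_prop
  obtain ⟨p, hp, hzero⟩ := intermediate_value_Ioo' (half_le_self pi_pos.le) hcont.continuousOn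
    (show (0 : ℝ) ∈ Ioo _ _ by constructor <;> simp [hπ, pi_pos])
  have hcos := (cos_neg_of_mem_Ioo hp).ne
  refine ⟨p, hp, ?_⟩
  simp only at hzero
  rw [negMulTan, tan_eq_sin_div_cos]
  field_simp
  linarith

/-- The `q > 0` with `q tanh q = t`, for `t > 0`. -/
def hypFreq : ℝ → ℝ := Function.invFunOn mulTanh (Ioi 0)

/-- The `p ∈ (π/2, π)` with `-p tan p = t`, for `t > 0`. -/
def trigFreq : ℝ → ℝ := Function.invFunOn negMulTan (Ioo (π / 2) π)

variable {t : ℝ}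

lemma mem_image_mulTanh (ht : 0 < t) : t ∈ mulTanh '' Ioi 0 := by
  have hzero : mulTanh 0 < t := by simpa [mulTanh] using ht
  have hlarge : t < mulTanh (t + 2) := by linarith [sub_one_le_mulTanh (t + 2)]
  exact image_mono Ioo_subset_Ioi_self
    (intermediate_value_Ioo (by linarith) continuous_mulTanh.continuousOn ⟨hzero, hlarge⟩)

lemma mem_image_negMulTan (ht : 0 < t) : t ∈ negMulTan '' Ioo (π / 2) π :=
  exists_negMulTan_eq continuous_const ht

lemma hypFreq_pos (ht : 0 < t) : 0 < hypFreq t := Function.invFunOn_mem (mem_image_mulTanh ht)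

lemma mulTanh_hypFreq (ht : 0 < t) : mulTanh (hypFreq t) = t :=
  Function.invFunOn_eq (mem_image_mulTanh ht)

lemma hypFreq_mulTanh {q : ℝ} (hq : 0 < q) : hypFreq (mulTanh q) = q :=
  strictMonoOn_mulTanh.injOn.leftInvOn_invFunOn hq

lemma trigFreq_mem_Ioo (ht : 0 < t) : trigFreq t ∈ Ioo (π / 2) π :=
  Function.invFunOn_mem (mem_image_negMulTan ht)

lemma negMulTan_trigFreq (ht : 0 < t) : negMulTan (trigFreq t) = t :=
  Function.invFunOn_eq (mem_image_negMulTan ht)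

lemma trigFreq_negMulTan {p : ℝ} (hp : p ∈ Ioo (π / 2) π) : trigFreq (negMulTan p) = p :=
  strictAntiOn_negMulTan.injOn.leftInvOn_invFunOn hp

lemma trigFreq_pos (ht : 0 < t) : 0 < trigFreq t := pi_div_two_pos.trans (trigFreq_mem_Ioo ht).1

lemma le_hypFreq_sq_sub_defect (ht : 0 < t) : t ≤ hypFreq t ^ 2 - defect t := by
  have := mulTanh_sq_le (hypFreq t)
  rw [mulTanh_hypFreq ht] at this
  rw [defect]
  linarith

lemma hypFreq_sq_sub_defect_pos (ht : 0 < t) : 0 < hypFreq t ^ 2 - defect t :=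
  ht.trans_le (le_hypFreq_sq_sub_defect ht)

lemma trigFreq_sq_add_defect_pos (ht : 0 < t) : 0 < trigFreq t ^ 2 + defect t :=
  sq_add_defect_pos (trigFreq_mem_Ioo ht) t

lemma hasDerivAt_hypFreq (ht : 0 < t) :
    HasDerivAt hypFreq (hypFreq t / (hypFreq t ^ 2 - defect t)) t := by
  have hq := hypFreq_pos ht
  have hd := hasStrictDerivAt_mulTanh hq.ne'
  rw [mulTanh_hypFreq ht] at hd
  have := hasDerivAt_invFunOn hd (div_pos (hypFreq_sq_sub_defect_pos ht) hq).ne'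
    strictMonoOn_mulTanh.injOn (Ioi_mem_nhds hq)
  rwa [inv_div, mulTanh_hypFreq ht] at this

lemma hasDerivAt_trigFreq (ht : 0 < t) :
    HasDerivAt trigFreq (-trigFreq t / (trigFreq t ^ 2 + defect t)) t := by
  have hp := trigFreq_mem_Ioo ht
  have hd := hasStrictDerivAt_negMulTan (trigFreq_pos ht).ne' (cos_neg_of_mem_Ioo hp).ne
  rw [negMulTan_trigFreq ht] at hd
  have := hasDerivAt_invFunOn hd
    (div_neg_of_neg_of_pos (neg_lt_zero.2 (trigFreq_sq_add_defect_pos ht)) (trigFreq_pos ht)).ne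
    strictAntiOn_negMulTan.injOn (Ioo_mem_nhds hp.1 hp.2)
  rwa [inv_div, negMulTan_trigFreq ht, div_neg, ← neg_div] at this

end Frequencies

section Gap

/-- `q² - p²` on the characteristic curve, which is half the parameter `α` of `rho`. -/
def gap (t : ℝ) : ℝ := hypFreq t ^ 2 - trigFreq t ^ 2

/-- `p² q² / (q² - p²)` on the characteristic curve, where `rho α = 8 α p² q² / (q² - p²)`. -/
def level (t : ℝ) : ℝ := trigFreq t ^ 2 * hypFreq t ^ 2 / gap t

variable {t : ℝ}

theorem rho_two_mul_gap (ht : 0 < t) :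
    rho (2 * gap t) = 16 * trigFreq t ^ 2 * hypFreq t ^ 2 :=
  rho_eq_of_mul_tanh_eq (trigFreq_mem_Ioo ht) (hypFreq_pos ht)
    ((mulTanh_hypFreq ht).trans (negMulTan_trigFreq ht).symm)

lemma hasDerivAt_gap (ht : 0 < t) : HasDerivAt gap
    (2 * (hypFreq t ^ 2 / (hypFreq t ^ 2 - defect t) +
      trigFreq t ^ 2 / (trigFreq t ^ 2 + defect t))) t := by
  refine (((hasDerivAt_hypFreq ht).fun_pow 2).fun_sub
    ((hasDerivAt_trigFreq ht).fun_pow 2)).congr_deriv ?_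
  push_cast
  ring

lemma strictMonoOn_gap : StrictMonoOn gap (Ioi 0) := by
  refine strictMonoOn_of_deriv_pos (convex_Ioi 0)
    (fun t ht => (hasDerivAt_gap ht).continuousAt.continuousWithinAt) fun t ht => ?_
  rw [interior_Ioi, mem_Ioi] at ht
  have := hypFreq_pos ht
  have := trigFreq_pos ht
  have := hypFreq_sq_sub_defect_pos ht
  have := trigFreq_sq_add_defect_pos ht
  rw [(hasDerivAt_gap ht).deriv]
  positivity

lemma exists_gap_eq {d : ℝ} (hd : 0 < d) : ∃ t, 0 < t ∧ gap t = d := by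
  obtain ⟨p, hp, hpq⟩ := exists_negMulTan_eq (g := fun p => mulTanh (√(p ^ 2 + d)))
    (continuous_mulTanh.comp (by fun_prop)) (mulTanh_pos (by positivity))
  have hq : 0 < √(p ^ 2 + d) := by positivity
  refine ⟨mulTanh (√(p ^ 2 + d)), mulTanh_pos hq, ?_⟩
  rw [gap, hypFreq_mulTanh hq, ← hpq, trigFreq_negMulTan hp, sq_sqrt (by positivity)]
  ring

/-- The parameters `t` of the characteristic curve with `p < q`, that is with `α > 0`. -/
def gapDomain : Set ℝ := {t | 0 < t ∧ 0 < gap t}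

lemma ordConnected_gapDomain : gapDomain.OrdConnected :=
  ⟨fun _ hs _ _ _ hz => have hz0 := hs.1.trans_le hz.1
    ⟨hz0, hs.2.trans_le (strictMonoOn_gap.monotoneOn hs.1 hz0 hz.1)⟩⟩

lemma one_lt_of_mem_gapDomain (ht : t ∈ gapDomain) : 1 < t := by
  rw [← mulTanh_hypFreq ht.1]
  refine one_lt_mulTanh ((three_halves_lt_of_mem_Ioo (trigFreq_mem_Ioo ht.1)).trans ?_)
  exact lt_of_pow_lt_pow_left₀ 2 (hypFreq_pos ht.1).le (sub_pos.1 ht.2)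

lemma defect_pos_of_mem_gapDomain (ht : t ∈ gapDomain) : 0 < defect t := by
  have := one_lt_of_mem_gapDomain ht
  rw [defect]
  nlinarith

lemma level_pos_of_mem_gapDomain (ht : t ∈ gapDomain) : 0 < level t := by
  have := hypFreq_pos ht.1
  have := trigFreq_pos ht.1
  exact div_pos (by positivity) ht.2

lemma rho_div_eq_level (ht : t ∈ gapDomain) : rho (2 * gap t) / (2 * gap t) = 8 * level t := by
  rw [rho_two_mul_gap ht.1, level]
  ring

/-- The common factor of the derivatives of `gap` and `level`. -/
def rate (t : ℝ) : ℝ := ((trigFreq t ^ 2 + defect t) * (hypFreq t ^ 2 - defect t))⁻¹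

lemma rate_pos (ht : 0 < t) : 0 < rate t :=
  inv_pos.2 (mul_pos (trigFreq_sq_add_defect_pos ht) (hypFreq_sq_sub_defect_pos ht))

lemma hasDerivAt_gap_of_mem_gapDomain (ht : t ∈ gapDomain) :
    HasDerivAt gap (2 * rate t * gap t * (2 * level t + defect t)) t := by
  refine (hasDerivAt_gap ht.1).congr_deriv ?_
  have hQ := (hypFreq_sq_sub_defect_pos ht.1).ne'
  have hP := (trigFreq_sq_add_defect_pos ht.1).ne'
  have hgap := ht.2.ne'
  rw [rate, level]
  field_simp
  rw [gap]
  ring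

lemma hasDerivAt_level (ht : t ∈ gapDomain) :
    HasDerivAt level (2 * rate t * level t * (defect t - gap t - 2 * level t)) t := by
  refine ((((hasDerivAt_trigFreq ht.1).fun_pow 2).fun_mul
    ((hasDerivAt_hypFreq ht.1).fun_pow 2)).fun_div (hasDerivAt_gap_of_mem_gapDomain ht)
    ht.2.ne').congr_deriv ?_
  have hQ := (hypFreq_sq_sub_defect_pos ht.1).ne'
  have hP := (trigFreq_sq_add_defect_pos ht.1).ne'
  have hgap := ht.2.ne'
  rw [rate, level]
  push_cast
  field_simp
  rw [gap]
  ring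

lemma hasDerivAt_defect (t : ℝ) : HasDerivAt defect (2 * t - 1) t :=
  ((hasDerivAt_pow 2 t).fun_sub (hasDerivAt_id' t)).congr_deriv (by norm_num)

/-- The derivative of `level` with respect to `log gap`. -/
def levelSlope (t : ℝ) : ℝ := level t * (defect t - gap t - 2 * level t) / (2 * level t + defect t)

lemma defect_mul_le_inv_rate (ht : t ∈ gapDomain) :
    defect t * (trigFreq t ^ 2 + defect t) ≤ (t - 1 / 2) / rate t := by
  have hT := one_lt_of_mem_gapDomain ht
  have hP := trigFreq_sq_add_defect_pos ht.1
  have hK : defect t ≤ (t - 1 / 2) * (hypFreq t ^ 2 - defect t) := by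
    have := mul_le_mul_of_nonneg_left (le_hypFreq_sq_sub_defect ht.1)
      (show 0 ≤ t - 1 / 2 by linarith)
    nlinarith [show defect t = t ^ 2 - t from rfl]
  calc defect t * (trigFreq t ^ 2 + defect t)
      ≤ (t - 1 / 2) * (hypFreq t ^ 2 - defect t) * (trigFreq t ^ 2 + defect t) := by gcongr
    _ = (t - 1 / 2) / rate t := by rw [rate, div_inv_eq_mul]; ring

/-- The polynomial is, up to a positive factor, the numerator of the derivative of `levelSlope`, for
`r = level t`, `d = gap t`, `k = defect t`, `p = trigFreq t ^ 2` and `w = (t - 1 / 2) / rate t`. -/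
lemma levelSlope_numerator_pos {r d k p w : ℝ} (hr : 0 < r) (hd : 0 < d) (hk : 0 < k) (hp : 0 < p)
    (hw : k * (p + k) ≤ w) :
    0 < 8 * r ^ 3 + 4 * k * r ^ 2 - 6 * k ^ 2 * r + k ^ 3 + 2 * k * r * d + k * d ^ 2 -
      3 * k ^ 2 * d + w * (d + 4 * r) := by
  calc 0 < k * ((d - k + r) ^ 2 + 3 * r ^ 2) + 8 * r ^ 3 + k * p * (d + 4 * r) := by positivity
    _ = 8 * r ^ 3 + 4 * k * r ^ 2 - 6 * k ^ 2 * r + k ^ 3 + 2 * k * r * d + k * d ^ 2 -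
      3 * k ^ 2 * d + k * (p + k) * (d + 4 * r) := by ring
    _ ≤ _ := by gcongr

lemma exists_hasDerivAt_levelSlope (ht : t ∈ gapDomain) :
    ∃ m, 0 < m ∧ HasDerivAt levelSlope m t := by
  have hl := rate_pos ht.1
  have hr := level_pos_of_mem_gapDomain ht
  have hk := defect_pos_of_mem_gapDomain ht
  have hdenom : 0 < 2 * level t + defect t := by positivity
  have hnum := levelSlope_numerator_pos hr ht.2 hk (pow_pos (trigFreq_pos ht.1) 2)
    (defect_mul_le_inv_rate ht)
  have hlevel := hasDerivAt_level ht
  have hd := (hlevel.fun_mul (((hasDerivAt_defect t).fun_sub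
    (hasDerivAt_gap_of_mem_gapDomain ht)).fun_sub (hlevel.const_mul 2))).fun_div
    ((hlevel.const_mul 2).fun_add (hasDerivAt_defect t)) hdenom.ne'
  refine ⟨_, ?_, hd⟩
  have hpos := mul_pos (mul_pos (mul_pos two_pos hl) hr) hnum
  refine div_pos (hpos.trans_eq ?_) (pow_pos hdenom 2)
  field_simp
  ring

lemma strictMonoOn_levelSlope : StrictMonoOn levelSlope gapDomain := by
  choose! m hm hd using fun t (ht : t ∈ gapDomain) => exists_hasDerivAt_levelSlope ht
  refine strictMonoOn_of_deriv_pos ordConnected_gapDomain.convex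
    (fun t ht => (hd t ht).continuousAt.continuousWithinAt) fun t ht => ?_
  rw [(hd t (interior_subset ht)).deriv]
  exact hm t (interior_subset ht)

theorem strictConvexOn_rho_exp_div_exp :
    StrictConvexOn ℝ univ fun x => rho (exp x) / exp x := by
  have himage : (fun t => log (2 * gap t)) '' gapDomain = univ := by
    refine eq_univ_of_forall fun x => ?_
    obtain ⟨t, ht, hgap⟩ := exists_gap_eq (half_pos (exp_pos x))
    refine ⟨t, ⟨ht, hgap ▸ half_pos (exp_pos x)⟩, ?_⟩
    simp only [hgap, mul_div_cancel₀ (exp x) two_ne_zero, log_exp]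
  rw [← himage]
  refine strictConvexOn_image_of_parametric (Y := fun t => 8 * level t)
    (X' := fun t => 2 * rate t * (2 * level t + defect t)) (m := fun t => 8 * levelSlope t)
    ordConnected_gapDomain (fun t ht => ?_) (fun t ht => ?_) (fun t ht => ?_) ?_ fun t ht => ?_
  · have hgap := ht.2.ne'
    refine (((hasDerivAt_gap_of_mem_gapDomain ht).const_mul 2).log (by positivity)).congr_deriv ?_
    field_simp
  · have := rate_pos ht.1
    have := level_pos_of_mem_gapDomain ht
    have := defect_pos_of_mem_gapDomain ht
    positivity
  · have := level_pos_of_mem_gapDomain ht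
    have := defect_pos_of_mem_gapDomain ht
    refine ((hasDerivAt_level ht).const_mul 8).congr_deriv ?_
    rw [levelSlope]
    field_simp
  · exact fun s hs t ht hst =>
      mul_lt_mul_of_pos_left (strictMonoOn_levelSlope hs ht hst) (by norm_num)
  · rw [exp_log (mul_pos two_pos ht.2), rho_div_eq_level ht]

end Gap

lemma Lfun_eq {a : ℝ} (ha : 0 < a) :
    Lfun a = π ^ 2 * (rho (exp (log (π ^ 2) + 4 * log a)) / exp (log (π ^ 2) + 4 * log a) +
      rho (exp (log (π ^ 2) - 4 * log a)) / exp (log (π ^ 2) - 4 * log a)) - 2 * π ^ 4 := by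
  have hpow : exp (4 * log a) = a ^ 4 := by
    rw [← exp_log (pow_pos ha 4), log_pow]
    norm_num
  rw [exp_add, exp_sub, exp_log (by positivity), hpow, Lfun, zpow_neg, ← div_eq_mul_inv]
  norm_cast
  field_simp

/-- `L` is strictly increasing for `a > 1`. -/
theorem Lfun_strictMono (a b : ℝ) (ha : 1 < a) (hab : a < b) :
    Lfun a < Lfun b := by
  have hlog : 4 * log a < 4 * log b := by
    have := log_lt_log (one_pos.trans ha) hab
    linarith
  have hsymm := strictMonoOn_add_symm_of_strictConvexOn strictConvexOn_rho_exp_div_exp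
    (log (π ^ 2)) (mul_pos four_pos (log_pos ha)).le
    (mul_pos four_pos (log_pos (ha.trans hab))).le hlog
  rw [Lfun_eq (one_pos.trans ha), Lfun_eq (one_pos.trans (ha.trans hab))]
  gcongr
end
end
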